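/- Let X be the punctured Möbius band with boundary circles C₁ and C₂. Suppose f : X → X is a boundary-preserving map with f(C₂) ⊆ C₁ and f(C₁) ⊆ C₂, such that the restriction, viewed as a map f|C₂ : C₂ → C₁, is essential, while the restriction f|C₁ : C₁ → ∂X is inessential. Then f is boundary-homotopic to a map g : X → X having exactly one fixed point. -/

import Mathlib

open Set

namespace PMB

/-- The square [0,1] × [−1,1] as a subspace of ℝ². -/
def Sq : Set (ℝ × ℝ) := Set.Icc 0 1 ×ˢ Set.Icc (-1) 1

/-- The identification (0,y) ∼ (1,−y) on the square. -/
def rel (p q : Sq) : Prop :=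
  (p : ℝ × ℝ) = (q : ℝ × ℝ) ∨
  ((p : ℝ × ℝ).1 = 0 ∧ (q : ℝ × ℝ).1 = 1 ∧ (p : ℝ × ℝ).2 = -(q : ℝ × ℝ).2) ∨
  ((p : ℝ × ℝ).1 = 1 ∧ (q : ℝ × ℝ).1 = 0 ∧ (q : ℝ × ℝ).2 = -(p : ℝ × ℝ).2)

/-- The Möbius band: the quotient of the square by the identification. -/
def M := Quot rel

instance : TopologicalSpace M := inferInstanceAs (TopologicalSpace (Quot rel))

/-- The quotient map. -/
def qm : Sq → M := Quot.mk rel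

/-- The open disc of radius 1/4 centred at (1/2, 0). -/
def Bdisc : Set (ℝ × ℝ) := Metric.ball (1/2, 0) (1/4)

/-- The circle of radius 1/4 centred at (1/2, 0). -/
def Scirc : Set (ℝ × ℝ) := Metric.sphere (1/2, 0) (1/4)

/-- The punctured Möbius band, as a subset of the Möbius band. -/
def Xset : Set M := {m | m ∉ qm '' {p : Sq | (p : ℝ × ℝ) ∈ Bdisc}}

/-- The punctured Möbius band as a topological space. -/
abbrev X : Type := ↥Xset

/-- The boundary circle of the Möbius band. -/
def C1 : Set X := {x | ∃ p : Sq, qm p = (x : M) ∧ ((p : ℝ × ℝ).2 = 1 ∨ (p : ℝ × ℝ).2 = -1)}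

/-- The boundary circle coming from the removed disc. -/
def C2 : Set X := {x | ∃ p : Sq, qm p = (x : M) ∧ (p : ℝ × ℝ) ∈ Scirc}

/-- The boundary of the punctured Möbius band. -/
def Bd : Set X := C1 ∪ C2

/-- A self-map of the punctured Möbius band is boundary-preserving if it sends ∂X into ∂X. -/
def BoundaryPreserving (f : C(X, X)) : Prop := MapsTo f Bd Bd

/-- Two self-maps are boundary-homotopic if there is a homotopy between them keeping
∂X inside ∂X at all times. -/
def BoundaryHomotopic (f g : C(X, X)) : Prop :=
  ∃ H : ContinuousMap.Homotopy f g, ∀ x : X, x ∈ Bd → ∀ t : unitInterval, H (t, x) ∈ Bd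

/-- A continuous map is inessential if it is homotopic to a constant map. -/
def Inessential {α β : Type*} [TopologicalSpace α] [TopologicalSpace β] (f : C(α, β)) : Prop :=
  ∃ b : β, ContinuousMap.Homotopic f (ContinuousMap.const α b)

/-- A continuous map is essential if it is not homotopic to a constant map. -/
def Essential {α β : Type*} [TopologicalSpace α] [TopologicalSpace β] (f : C(α, β)) : Prop :=
  ¬ Inessential f

/-- The restriction of a self-map of X to a subset `s` mapped into a subset `t`,
as a continuous map between the subspaces. -/
def restrictMap (f : C(X, X)) {s t : Set X} (h : MapsTo f s t) : C(s, t) :=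
  ⟨fun x => ⟨f x, h x.2⟩, Continuous.subtype_mk (f.continuous.comp continuous_subtype_val) _⟩

end PMB

section
namespace PMB

/-- The free group on two letters; `true` is the letter of the circle `C1`. -/
abbrev G := FreeGroup Bool

open FreeGroup

/-- the generator corresponding to `C1` -/
abbrev gx : G := FreeGroup.of true

lemma word_mul (w : G) (b : Bool) :
    (∃ L', w.toWord = L' ++ [(b, false)] ∧ (w * of b).toWord = L') ∨
      (w * of b).toWord = w.toWord ++ [(b, true)] := by
  by_cases h : FreeGroup.IsReduced (w.toWord ++ [(b, true)])
  · right
    rw [toWord_mul, toWord_of, h.reduce_eq]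
  · left
    rcases List.eq_nil_or_concat w.toWord with h0 | ⟨L', l, hl⟩
    · exfalso; apply h; rw [h0]; simp [FreeGroup.IsReduced]
    · have hw : FreeGroup.IsReduced w.toWord := isReduced_toWord
      have hl' : l = (b, false) := by
        by_contra hne
        apply h
        unfold FreeGroup.IsReduced
        rw [List.isChain_append]
        refine ⟨hw, by simp, ?_⟩
        intro a ha c hc
        rw [hl] at ha
        simp at ha hc
        subst ha hc
        obtain ⟨l1, l2⟩ := l
        simp at hne ⊢
        intro h1
        simpa using hne h1
      subst hl'
      refine ⟨L', by simpa using hl, ?_⟩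
      have : w * of b = FreeGroup.mk L' := by
        have h1 : w = FreeGroup.mk (L' ++ [(b, false)]) := by
          rw [← List.concat_eq_append, ← hl, mk_toWord]
        rw [h1, ← mul_mk, mul_assoc]
        have : (FreeGroup.mk [(b, false)] : G) = (of b)⁻¹ := rfl
        rw [this]; simp
      rw [this, toWord_mk]
      apply FreeGroup.IsReduced.reduce_eq
      rw [hl, List.concat_eq_append] at hw
      unfold FreeGroup.IsReduced at hw ⊢
      rw [List.isChain_append] at hw
      exact hw.1

/-- `w` starts with the letter `a` -/
def sw (w : G) (a : Bool) : Prop := w.toWord.head? = some (a, true)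

lemma sw_mul (w : G) (a b : Bool) : sw (w * of b) a ↔ (w = 1 ∧ a = b) ∨ sw w a := by
  unfold sw
  rcases word_mul w b with ⟨L', h1, h2⟩ | h
  · rw [h2, h1]
    have : w ≠ 1 := by
      rintro rfl; simp at h1
    cases L' with
    | nil => simp [this]
    | cons l L' => simp [this]
  · rw [h]
    by_cases hw : w = 1
    · subst hw; simp [eq_comm]
    · have : w.toWord ≠ [] := by simpa using hw
      obtain ⟨l, L, hl⟩ := List.exists_cons_of_ne_nil this
      rw [hl]; simp [hw]

lemma not_sw_one (a : Bool) : ¬ sw 1 a := by simp [sw]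

/-- separating letters -/
lemma sep (w : G) (hw : w ≠ 1) : (∃ a, sw w a) ∨ ∃ a, ¬ sw (of a * w) a ∧ w.toWord.head? = some (a, false) := by
  have : w.toWord ≠ [] := by simpa using hw
  obtain ⟨⟨a, e⟩, L, hl⟩ := List.exists_cons_of_ne_nil this
  cases e
  · right
    refine ⟨a, ?_, by simp [hl]⟩
    have h1 : of a * w = FreeGroup.mk L := by
      have h1 : w = FreeGroup.mk ([(a, false)] ++ L) := by
        rw [List.singleton_append, ← hl, mk_toWord]
      rw [h1, ← mul_mk, ← mul_assoc]
      have : (FreeGroup.mk [(a, false)] : G) = (of a)⁻¹ := rfl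
      rw [this]; simp
    have hw : FreeGroup.IsReduced w.toWord := isReduced_toWord
    rw [hl] at hw
    unfold sw
    have hL : FreeGroup.IsReduced L := by
      unfold FreeGroup.IsReduced at hw ⊢
      exact hw.tail
    rw [h1, toWord_mk, hL.reduce_eq]
    cases L with
    | nil => simp
    | cons l L =>
      simp
      rintro rfl
      unfold FreeGroup.IsReduced at hw
      simp at hw
  · left
    exact ⟨a, by simp [sw, hl]⟩

/-- distance to the line of powers of `gx` -/
def dl (w : G) : ℕ := (w.toWord.dropWhile (fun l => l.1)).length

lemma dl_one : dl 1 = 0 := by simp [dl]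

lemma dl_x_mul (w : G) : dl (gx * w) = dl w := by
  unfold dl
  rw [toWord_mul, toWord_of, List.singleton_append, reduce.cons, reduce_toWord]
  cases h : w.toWord with
  | nil => simp
  | cons l L =>
    obtain ⟨l1, l2⟩ := l
    simp
    split_ifs with h1
    · simp [← h1.1]
    · simp

lemma dl_zpow_mul (n : ℤ) (w : G) : dl (gx ^ n * w) = dl w := by
  induction n with
  | zero => simp
  | succ n ih =>
    rw [add_comm, zpow_add, zpow_one, mul_assoc, dl_x_mul]; exact ih
  | pred n ih =>
    rw [← dl_x_mul, ← mul_assoc, ← zpow_one_add]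
    convert ih using 4; ring

lemma mem_zpowers_of_all : ∀ (L : List (Bool × Bool)), (∀ l ∈ L, l.1 = true) →
    FreeGroup.mk L ∈ Subgroup.zpowers gx := by
  intro L
  induction L with
  | nil => intro _; exact one_mem _
  | cons l L ih =>
    intro h
    rw [← List.singleton_append, ← mul_mk]
    refine mul_mem ?_ (ih fun l hl => h l (List.mem_cons_of_mem _ hl))
    obtain ⟨l1, l2⟩ := l
    have : l1 = true := h (l1, l2) (by simp)
    subst this
    cases l2
    · exact inv_mem (Subgroup.mem_zpowers gx)
    · exact Subgroup.mem_zpowers gx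

lemma mem_of_all {w : G} (h : ∀ l ∈ w.toWord, l.1 = true) : w ∈ Subgroup.zpowers gx := by
  have := mem_zpowers_of_all _ h
  rwa [mk_toWord] at this

lemma dl_eq_zero {w : G} : dl w = 0 ↔ w ∈ Subgroup.zpowers gx := by
  constructor
  · intro h
    apply mem_of_all
    simpa [dl, List.dropWhile_eq_nil_iff] using h
  · rintro ⟨n, rfl⟩
    have := dl_zpow_mul n 1
    simpa [dl_one] using this

lemma all_of_mem {w : G} (h : w ∈ Subgroup.zpowers gx) : ∀ l ∈ w.toWord, l.1 = true := by
  have := dl_eq_zero.2 h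
  simpa [dl, List.dropWhile_eq_nil_iff] using this

lemma dropWhile_snoc (L : List (Bool × Bool)) (l : Bool × Bool)
    (h : ¬ ((∀ k ∈ L, k.1 = true) ∧ l.1 = true)) :
    ((L ++ [l]).dropWhile (fun l => l.1)).length = (L.dropWhile (fun l => l.1)).length + 1 := by
  rw [List.dropWhile_append]
  split_ifs with h1
  · have h0 : L.dropWhile (fun l => l.1) = [] := by simpa only [List.isEmpty_iff] using h1
    have h2 : ∀ k ∈ L, k.1 = true := List.dropWhile_eq_nil_iff.1 h0
    have : l.1 = false := by
      cases h3 : l.1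
      · rfl
      · exact absurd ⟨h2, h3⟩ h
    rw [h0]
    simp [List.dropWhile_cons, this]
  · simp

/-- edges off the line change the distance by exactly one -/
lemma dl_edge (w : G) (b : Bool) (h : ¬ (w ∈ Subgroup.zpowers gx ∧ b = true)) :
    dl (w * of b) = dl w + 1 ∨ dl w = dl (w * of b) + 1 := by
  rcases word_mul w b with ⟨L', h1, h2⟩ | h1
  · right
    unfold dl
    rw [h1, h2]
    apply dropWhile_snoc
    rintro ⟨h3, h4⟩
    simp at h4
    refine h ⟨mem_of_all ?_, h4⟩
    rw [h1]
    intro l hl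
    rcases List.mem_append.1 hl with hl | hl
    · exact h3 l hl
    · simp at hl; rw [hl]; exact h4
  · left
    unfold dl
    rw [h1]
    apply dropWhile_snoc
    rintro ⟨h3, h4⟩
    exact h ⟨mem_of_all h3, h4⟩

/-- every vertex off the line has a neighbour closer to the line -/
lemma dl_pred (w : G) (h : dl w ≠ 0) :
    (∃ g b, w = g * of b ∧ dl w = dl g + 1) ∨ ∃ b, dl w = dl (w * of b) + 1 := by
  rcases List.eq_nil_or_concat w.toWord with h0 | ⟨L', ⟨b, e⟩, hl⟩
  · exfalso; apply h; simp [dl, h0]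
  · rw [List.concat_eq_append] at hl
    have hL : dl w = (L'.dropWhile (fun l => l.1)).length + 1 := by
      unfold dl; rw [hl]; apply dropWhile_snoc
      rintro ⟨h3, h4⟩
      apply h
      rw [dl_eq_zero]
      apply mem_of_all
      rw [hl]
      intro l hl
      rcases List.mem_append.1 hl with hl | hl
      · exact h3 l hl
      · simp at hl; rw [hl]; exact h4
    have hw : FreeGroup.IsReduced w.toWord := isReduced_toWord
    have hr : FreeGroup.IsReduced L' := by
      rw [hl] at hw
      unfold FreeGroup.IsReduced at hw ⊢
      rw [List.isChain_append] at hw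
      exact hw.1
    have hmk : dl (FreeGroup.mk L') = (L'.dropWhile (fun l => l.1)).length := by
      unfold dl; rw [toWord_mk, hr.reduce_eq]
    have h1 : w = FreeGroup.mk L' * FreeGroup.mk [(b, e)] := by
      rw [mul_mk, ← hl, mk_toWord]
    cases e
    · right
      refine ⟨b, ?_⟩
      have : (FreeGroup.mk [(b, false)] : G) = (of b)⁻¹ := rfl
      have h2 : w * of b = FreeGroup.mk L' := by rw [h1, this]; simp
      rw [h2, hmk, hL]
    · left
      exact ⟨FreeGroup.mk L', b, h1, by rw [hmk, hL]⟩

lemma sqrt_mem (g : G) (h : g ^ 2 ∈ Subgroup.zpowers gx) : g ∈ Subgroup.zpowers gx := by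
  apply mem_of_all
  have h1 := all_of_mem h
  have h2 : (g ^ 2).toWord = _ := (toWord_pow g 2).trans
    (reduceCyclically.reduce_flatten_replicate_succ isReduced_toWord 1)
  rw [h2] at h1
  intro l hl
  rw [← reduceCyclically.conj_conjugator_reduceCyclically g.toWord] at hl
  apply h1
  simp only [List.mem_append] at hl ⊢
  rcases hl with (hl | hl) | hl
  · exact Or.inl (Or.inl hl)
  · exact Or.inl (Or.inr (by simp [hl]))
  · exact Or.inr hl

end PMB
end

section
namespace PMB
open FreeGroup

/-- edges of the tree -/
abbrev Ed := G × Bool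

open Classical in
/-- vertices of the tree -/
noncomputable def V (h : G) : Ed → ℝ := fun ε => if sw (ε.1⁻¹ * h) ε.2 then 1 else 0

open Classical in
/-- points on edges of the tree -/
noncomputable def ee (g : G) (a : Bool) (s : ℝ) : Ed → ℝ := Function.update (V g) (g, a) s

lemma V_congr {h h' : G} {ε ε' : Ed} (e : sw (ε.1⁻¹ * h) ε.2 ↔ sw (ε'.1⁻¹ * h') ε'.2) :
    V h ε = V h' ε' := by
  unfold V
  by_cases h1 : sw (ε.1⁻¹ * h) ε.2
  · rw [if_pos h1, if_pos (e.1 h1)]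
  · rw [if_neg h1, if_neg (fun h2 => h1 (e.2 h2))]

lemma V_self (h : G) (b : Bool) : V h (h, b) = 0 := by
  simp [V, not_sw_one]

lemma V_or (h : G) (ε : Ed) : V h ε = 0 ∨ V h ε = 1 := by
  unfold V; split_ifs <;> simp

lemma sw_of (b : Bool) : sw (of b) b := by simp [sw]

lemma V_pred (h : G) (b : Bool) : V (h * of b) (h, b) = 1 := by
  simp [V, sw_of]

lemma V_pred' (h : G) (b : Bool) : V h (h * (of b)⁻¹, b) = 1 := by
  have := V_pred (h * (of b)⁻¹) b
  simpa using this

lemma ee_same (g : G) (a : Bool) (s : ℝ) : ee g a s (g, a) = s := by simp [ee]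

lemma ee_ne (g : G) (a : Bool) (s : ℝ) (ε : Ed) (h : ε ≠ (g, a)) : ee g a s ε = V g ε := by
  simp [ee, h]

lemma ee_zero (g : G) (a : Bool) : ee g a 0 = V g := by
  unfold ee; rw [← V_self g a, Function.update_eq_self]

lemma ee_one (g : G) (a : Bool) : ee g a 1 = V (g * of a) := by
  funext ε
  by_cases h : ε = (g, a)
  · subst h; rw [ee_same, V_pred]
  · rw [ee_ne _ _ _ _ h]
    symm
    apply V_congr
    rw [← mul_assoc]
    have : sw (ε.1⁻¹ * g * of a) ε.2 ↔ sw (ε.1⁻¹ * g) ε.2 := by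
      rw [sw_mul]
      constructor
      · rintro (⟨h1, h2⟩ | h1)
        · exact absurd (Prod.ext (inv_mul_eq_one.1 h1) h2) h
        · exact h1
      · exact Or.inr
    exact this

lemma ee_ne' (g : G) (a : Bool) (s : ℝ) (ε : Ed) (h : ε ≠ (g, a)) :
    ee g a s ε = V (g * of a) ε := by
  rw [ee_ne _ _ _ _ h, ← ee_one, ee_ne _ _ _ _ h]

lemma V_sep {h g : G} (hn : h ≠ g) : (∃ b, V g (h, b) = 1) ∨ ∃ b, V g (h * (of b)⁻¹, b) = 0 := by
  have hw : h⁻¹ * g ≠ 1 := fun h' => hn (inv_mul_eq_one.1 h')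
  rcases sep _ hw with ⟨a, ha⟩ | ⟨a, ha, -⟩
  · left; exact ⟨a, by simp [V, ha]⟩
  · right; refine ⟨a, ?_⟩
    rw [← mul_assoc] at ha
    simp [V, ha]

lemma V_inj {h g : G} (e : V h = V g) : h = g := by
  by_contra hn
  rcases V_sep hn with ⟨b, hb⟩ | ⟨b, hb⟩
  · rw [← e, V_self] at hb; norm_num at hb
  · rw [← e, V_pred'] at hb; norm_num at hb

lemma ee_vertex (g : G) (a : Bool) (s : ℝ) (hs : s = 0 ∨ s = 1) :
    ee g a s = V g ∧ s = 0 ∨ ee g a s = V (g * of a) ∧ s = 1 := by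
  rcases hs with rfl | rfl
  · left; exact ⟨ee_zero _ _, rfl⟩
  · right; exact ⟨ee_one _ _, rfl⟩

/-- kernel of the edge parametrisation -/
lemma ee_ker {g g' : G} {a a' : Bool} {s s' : ℝ} (h : ee g a s = ee g' a' s') :
    (g = g' ∧ a = a' ∧ s = s') ∨ ((s = 0 ∨ s = 1) ∧ (s' = 0 ∨ s' = 1)) := by
  by_cases he : (g, a) = (g', a')
  · left
    obtain ⟨rfl, rfl⟩ := Prod.mk.inj he
    have := congrFun h (g, a)
    rw [ee_same, ee_same] at this
    exact ⟨rfl, rfl, this⟩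
  · right
    have h1 := congrFun h (g, a)
    have h2 := congrFun h (g', a')
    rw [ee_same, ee_ne _ _ _ _ he] at h1
    rw [ee_same, ee_ne _ _ _ _ (Ne.symm he)] at h2
    rw [h1, ← h2]
    exact ⟨V_or _ _, V_or _ _⟩

/-- The tree. -/
def Tset : Set (Ed → ℝ) := {v | ∃ g a, ∃ s ∈ Icc (0:ℝ) 1, v = ee g a s}

/-- The tree as a space. -/
abbrev T : Type := ↥Tset

lemma ee_mem {g : G} {a : Bool} {s : ℝ} (hs : s ∈ Icc (0:ℝ) 1) : ee g a s ∈ Tset :=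
  ⟨g, a, s, hs, rfl⟩

lemma V_mem (h : G) : V h ∈ Tset := ⟨h, true, 0, by simp, (ee_zero _ _).symm⟩

/-- action on functions -/
def act (k : G) (v : Ed → ℝ) : Ed → ℝ := fun ε => v (k⁻¹ * ε.1, ε.2)

lemma act_V (k h : G) : act k (V h) = V (k * h) := by
  funext ε
  apply V_congr
  simp [mul_assoc]

lemma act_ee (k g : G) (a : Bool) (s : ℝ) : act k (ee g a s) = ee (k * g) a s := by
  funext ε
  by_cases h : ε = (k * g, a)
  · subst h; rw [ee_same]; simp [act, ee_same]
  · rw [ee_ne _ _ _ _ h, ← act_V]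
    unfold act
    apply ee_ne
    intro h1
    apply h
    have h2 := congrArg Prod.fst h1
    have h3 := congrArg Prod.snd h1
    simp at h2 h3
    refine Prod.ext ?_ h3
    simp [← h2]

lemma act_mem (k : G) {v : Ed → ℝ} (hv : v ∈ Tset) : act k v ∈ Tset := by
  obtain ⟨g, a, s, hs, rfl⟩ := hv
  rw [act_ee]; exact ee_mem hs

instance : MulAction G T where
  smul k v := ⟨act k v.1, act_mem k v.2⟩
  one_smul v := by
    apply Subtype.ext; funext ε
    change v.1 _ = _
    simp
  mul_smul k l v := by
    apply Subtype.ext; funext ε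
    change v.1 _ = v.1 _
    simp [mul_assoc]

lemma smul_val (k : G) (v : T) : (k • v).1 = act k v.1 := rfl

instance : ContinuousConstSMul G T where
  continuous_const_smul k := by
    apply Continuous.subtype_mk
    apply continuous_pi
    intro ε
    exact (continuous_apply _).comp continuous_subtype_val

/-- open star of a vertex -/
def star (h : G) : Set T := {v | ∀ b, v.1 (h, b) < 1 ∧ 0 < v.1 (h * (of b)⁻¹, b)}

lemma continuous_ev (ε : Ed) : Continuous fun v : T => v.1 ε :=
  (continuous_apply ε).comp continuous_subtype_val

lemma isOpen_star (h : G) : IsOpen (star h) := by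
  have : star h = ⋂ b, ({v : T | v.1 (h, b) < 1} ∩ {v : T | 0 < v.1 (h * (of b)⁻¹, b)}) := by
    ext v; simp [star]
  rw [this]
  exact isOpen_iInter_of_finite fun b =>
    (isOpen_lt (continuous_ev _) continuous_const).inter
      (isOpen_lt continuous_const (continuous_ev _))

lemma star_edge {h g : G} {a : Bool} {s : ℝ} {v : T} (hv : v ∈ star h) (e : v.1 = ee g a s) :
    g = h ∨ g * of a = h := by
  by_contra hc
  push Not at hc
  rcases V_sep (Ne.symm hc.1) with ⟨b, hb⟩ | ⟨b, hb⟩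
  · have := (hv b).1
    rw [e, ee_ne _ _ _ _ (fun h' => hc.1 (congrArg Prod.fst h').symm), hb] at this
    exact lt_irrefl _ this
  · have := (hv b).2
    rw [e, ee_ne, hb] at this
    · exact lt_irrefl _ this
    · intro h'
      have h1 := congrArg Prod.fst h'
      have h2 := congrArg Prod.snd h'
      simp only at h1 h2
      apply hc.2
      rw [← h1, h2]; simp

lemma V_star (h : G) (hh : V h ∈ Tset) : (⟨V h, hh⟩ : T) ∈ star h := by
  intro b
  simp only
  rw [V_self, V_pred']; norm_num

lemma of_ne_one (b : Bool) : (of b : G) ≠ 1 := FreeGroup.of_ne_one b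

lemma ee_star (g : G) (a : Bool) (s : ℝ) (hs : s < 1) (hh : ee g a s ∈ Tset) :
    (⟨ee g a s, hh⟩ : T) ∈ star g := by
  intro b
  simp only
  constructor
  · by_cases h : (g, b) = (g, a)
    · rw [h, ee_same]; exact hs
    · rw [ee_ne _ _ _ _ h, V_self]; norm_num
  · rw [ee_ne, V_pred']; norm_num
    intro h
    have := congrArg Prod.fst h
    simp at this

lemma exists_star (v : T) : ∃ h, v ∈ star h := by
  obtain ⟨v, hv⟩ := v
  obtain ⟨g, a, s, hs, rfl⟩ := id hv
  rcases hs.2.lt_or_eq with h | rfl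
  · exact ⟨g, ee_star g a s h hv⟩
  · refine ⟨g * of a, ?_⟩
    have : (⟨ee g a 1, hv⟩ : T) = ⟨V (g * of a), V_mem _⟩ := Subtype.ext (ee_one _ _)
    rw [this]; exact V_star _ _

/-- closed edges -/
def Edge (ε : Ed) : Set T := {v | ∃ s ∈ Icc (0:ℝ) 1, v.1 = ee ε.1 ε.2 s}

lemma iUnion_Edge : ⋃ ε, Edge ε = univ := by
  rw [eq_univ_iff_forall]
  rintro ⟨v, g, a, s, hs, rfl⟩
  exact mem_iUnion.2 ⟨(g, a), s, hs, rfl⟩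

lemma continuous_ee (g : G) (a : Bool) : Continuous fun s => ee g a s := by
  unfold ee
  fun_prop

lemma isClosed_Edge (ε : Ed) : IsClosed (Edge ε) := by
  have : Edge ε = (Subtype.val : T → _) ⁻¹' ((fun s => ee ε.1 ε.2 s) '' Icc (0:ℝ) 1) := by
    ext v
    simp only [Edge, mem_ofPred_eq, mem_preimage, mem_image]
    constructor
    · rintro ⟨s, hs, h⟩; exact ⟨s, hs, h.symm⟩
    · rintro ⟨s, hs, h⟩; exact ⟨s, hs, h.symm⟩
  rw [this]
  exact ((isCompact_Icc.image (continuous_ee _ _)).isClosed).preimage continuous_subtype_val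

lemma locallyFinite_Edge : LocallyFinite Edge := by
  intro v
  obtain ⟨h, hv⟩ := exists_star v
  refine ⟨star h, (isOpen_star h).mem_nhds hv, ?_⟩
  apply ((finite_range fun b : Bool => ((h, b) : Ed)).union
    (finite_range fun b : Bool => ((h * (of b)⁻¹, b) : Ed))).subset
  rintro ⟨g, a⟩ ⟨w, ⟨s, hs, hw⟩, hw'⟩
  rcases star_edge hw' hw with h1 | h1
  · left; exact ⟨a, by simp only at h1; rw [h1]⟩
  · right; exact ⟨a, by simp [← h1]⟩

/-- quotient of the tree -/
abbrev TG : Type := MulAction.orbitRel.Quotient G T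

/-- quotient map of the tree -/
def tmk : T → TG := Quotient.mk _

lemma tmk_eq {v w : T} : tmk v = tmk w ↔ v ∈ MulAction.orbit G w := by
  unfold tmk
  rw [Quotient.eq]
  exact MulAction.orbitRel_apply

lemma tmk_covering : IsQuotientCoveringMap tmk G where
  toIsQuotientMap := isQuotientMap_quot_mk
  toContinuousConstSMul := inferInstance
  apply_eq_iff_mem_orbit := tmk_eq
  disjoint := by
    rintro ⟨v, hv⟩
    have key : ∀ h : G, ∃ U ∈ nhds (⟨V h, V_mem h⟩ : T), ∀ k : G,
        ((k • ·) '' U ∩ U).Nonempty → k = 1 := by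
      intro h
      refine ⟨⋂ b, ({v : T | v.1 (h, b) < 1/2} ∩ {v : T | 1/2 < v.1 (h * (of b)⁻¹, b)}), ?_, ?_⟩
      · apply IsOpen.mem_nhds
        · exact isOpen_iInter_of_finite fun b =>
            (isOpen_lt (continuous_ev _) continuous_const).inter
              (isOpen_lt continuous_const (continuous_ev _))
        · rw [mem_iInter]; intro b
          simp only [mem_inter_iff, mem_ofPred_eq]
          rw [V_self, V_pred']; norm_num
      · rintro k ⟨w', ⟨w, hw, rfl⟩, hw'⟩
        simp only [mem_iInter, mem_inter_iff, mem_ofPred_eq, smul_val, act] at hw hw'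
        have hwk : w ∈ star h := fun b => ⟨by linarith [(hw b).1], by linarith [(hw b).2]⟩
        have hwk' : w ∈ star (k⁻¹ * h) := fun b =>
          ⟨by linarith [(hw' b).1], by rw [mul_assoc]; linarith [(hw' b).2]⟩
        obtain ⟨g, a, s, hs, e⟩ := w.2
        rcases star_edge hwk e with h1 | h1 <;> rcases star_edge hwk' e with h2 | h2
        · rw [h1] at h2; simpa using h2
        · exfalso
          have e1 := (hw a).1
          have e2 := (hw' a).2
          rw [← mul_assoc, ← h2, mul_inv_cancel_right] at e2
          rw [← h1] at e1
          linarith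
        · exfalso
          have e1 := (hw a).2
          have e2 := (hw' a).1
          rw [← h2] at e2
          rw [← h1] at e1
          rw [mul_inv_cancel_right] at e1
          linarith
        · rw [h1] at h2; simpa using h2
    obtain ⟨g, a, s, hs, e⟩ := id hv
    rcases hs.1.eq_or_lt with h0 | h0
    · have : (⟨v, hv⟩ : T) = ⟨V g, V_mem g⟩ := by
        apply Subtype.ext; simp only; rw [e, ← h0, ee_zero]
      rw [this]; exact key g
    rcases hs.2.eq_or_lt with h1 | h1
    · have : (⟨v, hv⟩ : T) = ⟨V (g * of a), V_mem _⟩ := by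
        apply Subtype.ext; simp only; rw [e, h1, ee_one]
      rw [this]; exact key _
    refine ⟨{v : T | 0 < v.1 (g, a)} ∩ {v : T | v.1 (g, a) < 1}, ?_, ?_⟩
    · apply IsOpen.mem_nhds
      · exact (isOpen_lt continuous_const (continuous_ev _)).inter
          (isOpen_lt (continuous_ev _) continuous_const)
      · simp only [mem_inter_iff, mem_ofPred_eq, e, ee_same]; exact ⟨h0, h1⟩
    · rintro k ⟨w', ⟨w, hw, rfl⟩, hw'⟩
      simp only [mem_inter_iff, mem_ofPred_eq, smul_val, act] at hw hw'
      obtain ⟨g', a', s', hs', e'⟩ := w.2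
      have hh : ∀ ε, 0 < w.1 ε → w.1 ε < 1 → ε = (g', a') := by
        intro ε h1 h2
        by_contra hn
        rw [e', ee_ne _ _ _ _ hn] at h1 h2
        rcases V_or g' ε with h3 | h3 <;> rw [h3] at h1 h2 <;> linarith
      have := (hh _ hw.1 hw.2).trans (hh _ hw'.1 hw'.2).symm
      have := congrArg Prod.fst this
      simpa using this.symm

/-! ### the retraction to the line -/

/-- projecting to `[0,1]` -/
noncomputable def cl (x : ℝ) : ℝ := max 0 (min 1 x)

lemma cl_mem (x : ℝ) : cl x ∈ Icc (0:ℝ) 1 := by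
  unfold cl; constructor
  · exact le_max_left _ _
  · simp

lemma cl_of_le {x : ℝ} (h : x ≤ 0) : cl x = 0 := by
  unfold cl; rw [max_eq_left]; exact (min_le_right _ _).trans h

lemma cl_of_ge {x : ℝ} (h : 1 ≤ x) : cl x = 1 := by
  unfold cl; rw [min_eq_left h]; simp

lemma cl_of_mem {x : ℝ} (h : x ∈ Icc (0:ℝ) 1) : cl x = x := by
  unfold cl; rw [min_eq_right h.2, max_eq_right h.1]

lemma continuous_cl : Continuous cl := by unfold cl; fun_prop

/-- edges of the line -/
def onl (ε : Ed) : Prop := ε.1 ∈ Subgroup.zpowers gx ∧ ε.2 = true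

open Classical in
/-- one coordinate of the retraction -/
noncomputable def cap1 (τ : ℝ) (ε : Ed) (s : ℝ) : ℝ :=
  if onl ε then s else if dl ε.1 < dl (ε.1 * of ε.2) then min s (cl (τ - dl ε.1))
    else max s (1 - cl (τ - dl (ε.1 * of ε.2)))

/-- retraction towards the line -/
noncomputable def cap (τ : ℝ) (v : Ed → ℝ) : Ed → ℝ := fun ε => cap1 τ ε (v ε)

lemma continuous_cap : Continuous fun p : ℝ × (Ed → ℝ) => cap p.1 p.2 := by
  apply continuous_pi
  intro ε
  have := continuous_cl
  unfold cap cap1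
  split_ifs <;> fun_prop

lemma dl_mul_mem {g : G} (hg : g ∈ Subgroup.zpowers gx) (w : G) : dl (g * w) = dl w := by
  obtain ⟨n, rfl⟩ := hg
  exact dl_zpow_mul n w

lemma cap_act {g : G} (hg : g ∈ Subgroup.zpowers gx) (τ : ℝ) (v : Ed → ℝ) :
    cap τ (act g v) = act g (cap τ v) := by
  funext ε
  have h1 : dl (g⁻¹ * ε.1) = dl ε.1 := dl_mul_mem (inv_mem hg) _
  have h2 : dl (g⁻¹ * ε.1 * of ε.2) = dl (ε.1 * of ε.2) := by
    rw [mul_assoc]; exact dl_mul_mem (inv_mem hg) _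
  have h3 : onl (g⁻¹ * ε.1, ε.2) ↔ onl ε := by
    unfold onl
    rw [Subgroup.mul_mem_cancel_left _ (inv_mem hg)]
  unfold cap act cap1
  simp only [h1, h2]
  by_cases h4 : onl ε
  · rw [if_pos h4, if_pos (h3.2 h4)]
  · rw [if_neg h4, if_neg (fun h => h4 (h3.1 h))]

/-- minimal distance of an edge to the line -/
def dmin (ε : Ed) : ℕ := min (dl ε.1) (dl (ε.1 * of ε.2))

lemma onl_dl {ε : Ed} (h : onl ε) : dl ε.1 = 0 ∧ dl (ε.1 * of ε.2) = 0 := by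
  refine ⟨dl_eq_zero.2 h.1, dl_eq_zero.2 ?_⟩
  rw [h.2]; exact mul_mem h.1 (Subgroup.mem_zpowers gx)

lemma V_zpow (n : ℤ) (ε : Ed) (h : ¬ onl ε) : V (gx ^ n) ε = V 1 ε := by
  have st : ∀ n : ℤ, V (gx ^ (n + 1)) ε = V (gx ^ n) ε := by
    intro n
    rw [zpow_add_one, ← ee_one, ee_ne]
    rintro rfl
    exact h ⟨⟨n, rfl⟩, rfl⟩
  induction n with
  | zero => simp
  | succ n ih => rw [st, ih]
  | pred n ih => rw [← ih, ← st]; simp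

lemma V_far : ∀ (n : ℕ) (h : G) (ε : Ed), dl h = n → ¬ onl ε → dl h ≤ dmin ε → V h ε = V 1 ε := by
  intro n
  induction n with
  | zero =>
    intro h ε hn ho _
    obtain ⟨m, rfl⟩ := dl_eq_zero.1 hn
    exact V_zpow m ε ho
  | succ n ih =>
    intro h ε hn ho hd
    rcases dl_pred h (by omega) with ⟨g, b, rfl, h2⟩ | ⟨b, h2⟩
    · rw [← ee_one, ee_ne, ih g ε (by omega) ho (by omega)]
      rintro rfl
      unfold dmin at hd
      simp only at hd
      omega
    · rw [← ee_zero h b, ee_ne', ih _ ε (by omega) ho (by omega)]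
      rintro rfl
      unfold dmin at hd
      simp only at hd
      omega

lemma cap_V {τ : ℝ} {h : G} (ht : dl h ≤ τ) : cap τ (V h) = V h := by
  funext ε
  unfold cap cap1
  split_ifs with h1 h2
  · rfl
  · by_cases hd : dl h ≤ dmin ε
    · rw [V_far _ h ε rfl h1 hd, ← V_far _ ε.1 ε rfl h1 (by unfold dmin; omega)]
      rw [V_self]
      exact min_eq_left (cl_mem _).1
    · have : dl ε.1 + 1 ≤ dl h := by unfold dmin at hd; omega
      have : (dl ε.1 : ℝ) + 1 ≤ dl h := by exact_mod_cast this
      rw [cl_of_ge (by linarith)]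
      rcases V_or h ε with h | h <;> rw [h] <;> norm_num
  · by_cases hd : dl h ≤ dmin ε
    · rw [V_far _ h ε rfl h1 hd, ← V_far _ (ε.1 * of ε.2) ε rfl h1 (by unfold dmin; omega)]
      rw [V_pred]
      exact max_eq_left (by linarith [(cl_mem (τ - dl (ε.1 * of ε.2))).1])
    · have : dl (ε.1 * of ε.2) + 1 ≤ dl h := by
        unfold dmin at hd; omega
      have : (dl (ε.1 * of ε.2) : ℝ) + 1 ≤ dl h := by exact_mod_cast this
      rw [cl_of_ge (by linarith)]
      rcases V_or h ε with h | h <;> rw [h] <;> norm_num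

open Classical in
lemma cap_update (τ : ℝ) (v : Ed → ℝ) (ε : Ed) (s : ℝ) :
    cap τ (Function.update v ε s) = Function.update (cap τ v) ε (cap1 τ ε s) := by
  funext ε'
  by_cases h : ε' = ε
  · subst h; simp [cap]
  · simp [cap, h]

lemma cap1_mem {τ : ℝ} {ε : Ed} {s : ℝ} (hs : s ∈ Icc (0:ℝ) 1) : cap1 τ ε s ∈ Icc (0:ℝ) 1 := by
  unfold cap1
  have h1 := cl_mem (τ - dl ε.1)
  have h2 := cl_mem (τ - dl (ε.1 * of ε.2))
  split_ifs
  · exact hs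
  · exact ⟨le_min hs.1 h1.1, (min_le_left _ _).trans hs.2⟩
  · exact ⟨hs.1.trans (le_max_left _ _), max_le hs.2 (by linarith [h2.1])⟩

open Classical in
/-- an edge has an inner vertex -/
lemma inner (g : G) (a : Bool) : ∃ h : G, dl h = dmin (g, a) ∧ (h = g ∨ h = g * of a) ∧
    ∀ s, ee g a s = Function.update (V h) (g, a) s := by
  by_cases hd : dl g ≤ dl (g * of a)
  · exact ⟨g, by simp [dmin, hd], Or.inl rfl, fun s => rfl⟩
  · refine ⟨g * of a, by simp [dmin]; omega, Or.inr rfl, fun s => ?_⟩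
    rw [← ee_one]; simp [ee]

lemma cap_near {τ : ℝ} {g : G} {a : Bool} (s : ℝ) (ht : dmin (g, a) ≤ τ) :
    cap τ (ee g a s) = ee g a (cap1 τ (g, a) s) := by
  obtain ⟨h, h1, -, h2⟩ := inner g a
  rw [h2, h2, cap_update, cap_V]
  rw [h1]; exact ht

lemma cap_far {τ : ℝ} {g : G} {a : Bool} {s : ℝ} (hs : s ∈ Icc (0:ℝ) 1) (ho : ¬ onl (g, a))
    (ht : τ ≤ dmin (g, a)) :
    ∃ h, dl h = dmin (g, a) ∧ cap τ (ee g a s) = cap τ (V h) := by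
  obtain ⟨h, h1, h3, h2⟩ := inner g a
  refine ⟨h, h1, ?_⟩
  rw [h2, cap_update]
  conv_rhs => rw [← Function.update_eq_self (g, a) (V h), cap_update]
  congr 1
  have hv : V h (g, a) = V 1 (g, a) := V_far _ h _ rfl ho h1.le
  unfold cap1
  rw [if_neg ho, if_neg ho]
  simp only
  split_ifs with h4
  · have : (dmin (g, a) : ℝ) = dl g := by unfold dmin; simp only; rw [min_eq_left h4.le]
    rw [cl_of_le (by linarith), min_eq_right hs.1, min_eq_right]
    rcases V_or h (g, a) with h | h <;> rw [h]; norm_num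
  · have : (dmin (g, a) : ℝ) = dl (g * of a) := by
      unfold dmin; simp only; rw [min_eq_right (by omega)]
    rw [cl_of_le (by linarith)]
    rw [max_eq_right (by linarith [hs.2]), max_eq_right]
    rcases V_or h (g, a) with h | h <;> rw [h] <;> norm_num

/-- The line. -/
def Line : Set (Ed → ℝ) := {v | ∃ g ∈ Subgroup.zpowers gx, ∃ s ∈ Icc (0:ℝ) 1, v = ee g true s}

lemma capV_mem {τ : ℝ} (ht : 0 ≤ τ) : ∀ (n : ℕ) (h : G), dl h = n →
    cap τ (V h) ∈ Tset ∧ (τ = 0 → cap τ (V h) ∈ Line) := by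
  intro n
  induction n with
  | zero =>
    intro h hn
    rw [cap_V (by rw [hn]; simpa using ht)]
    exact ⟨V_mem h, fun _ => ⟨h, dl_eq_zero.1 hn, 0, by simp, (ee_zero _ _).symm⟩⟩
  | succ n ih =>
    have main : ∀ g a s, s ∈ Icc (0:ℝ) 1 → dmin (g, a) = n → ¬ onl (g, a) →
        cap τ (ee g a s) ∈ Tset ∧ (τ = 0 → cap τ (ee g a s) ∈ Line) := by
      intro g a s hs hd ho
      by_cases h1 : τ ≤ dmin (g, a)
      · obtain ⟨h, h2, h3⟩ := cap_far hs ho h1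
        rw [h3]; exact ih h (by omega)
      · push Not at h1
        rw [cap_near s h1.le]
        refine ⟨ee_mem (cap1_mem hs), fun h0 => ?_⟩
        rw [h0] at h1
        have : (0:ℝ) ≤ dmin (g, a) := Nat.cast_nonneg _
        linarith
    intro h hn
    rcases dl_pred h (by omega) with ⟨g, b, rfl, h2⟩ | ⟨b, h2⟩
    · rw [← ee_one]
      apply main _ _ _ (by simp)
      · unfold dmin; simp only; omega
      · intro ho; have := onl_dl ho; simp only at this; omega
    · rw [← ee_zero h b]
      apply main _ _ _ (by simp)
      · unfold dmin; simp only; omega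
      · intro ho; have := onl_dl ho; simp only at this; omega

lemma cap_mem_aux {τ : ℝ} (ht : 0 ≤ τ) {v : Ed → ℝ} (hv : v ∈ Tset) :
    cap τ v ∈ Tset ∧ (τ = 0 → cap τ v ∈ Line) := by
  obtain ⟨g, a, s, hs, rfl⟩ := hv
  by_cases h1 : τ ≤ dmin (g, a) ∧ ¬ onl (g, a)
  · obtain ⟨h, h2, h3⟩ := cap_far hs h1.2 h1.1
    rw [h3]; exact capV_mem ht _ h rfl
  · have h2 : dmin (g, a) ≤ τ := by
      by_cases ho : onl (g, a)
      · have := onl_dl ho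
        unfold dmin; rw [this.1, this.2]; simpa using ht
      · push Not at h1
        by_contra h3
        push Not at h3
        exact ho (h1 h3.le)
    rw [cap_near s h2]
    refine ⟨ee_mem (cap1_mem hs), fun h0 => ?_⟩
    have ho : onl (g, a) := by
      by_contra ho
      apply h1
      rw [h0]; exact ⟨Nat.cast_nonneg _, ho⟩
    have ha : a = true := ho.2
    subst ha
    exact ⟨g, ho.1, _, cap1_mem hs, rfl⟩

lemma cap_mem {τ : ℝ} (ht : 0 ≤ τ) {v : Ed → ℝ} (hv : v ∈ Tset) : cap τ v ∈ Tset :=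
  (cap_mem_aux ht hv).1

lemma cap_zero {v : Ed → ℝ} (hv : v ∈ Tset) : cap 0 v ∈ Line :=
  (cap_mem_aux le_rfl hv).2 rfl

lemma cap_line {τ : ℝ} (ht : 0 ≤ τ) {v : Ed → ℝ} (hv : v ∈ Line) : cap τ v = v := by
  obtain ⟨g, hg, s, hs, rfl⟩ := hv
  have ho : onl (g, true) := ⟨hg, rfl⟩
  rw [cap_near]
  · congr 1; unfold cap1; rw [if_pos ho]
  · have := onl_dl ho
    unfold dmin; rw [this.1, this.2]; simpa using ht

lemma cap_star {τ : ℝ} {h : G} {v : T} (hv : v ∈ star h) (ht : dl h + 1 ≤ τ) : cap τ v.1 = v.1 := by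
  obtain ⟨g, a, s, hs, e⟩ := v.2
  have h1 : dmin (g, a) ≤ dl h := by
    rcases star_edge hv e with h1 | h1
    · rw [← h1]; exact min_le_left _ _
    · rw [← h1]; exact min_le_right _ _
  have h2 : (dmin (g, a) : ℝ) ≤ dl h := by exact_mod_cast h1
  rw [e, cap_near s (by linarith)]
  congr 1
  unfold cap1
  split_ifs with h3 h4
  · rfl
  · have : (dmin (g, a) : ℝ) = dl g := by unfold dmin; rw [min_eq_left h4.le]
    simp only
    rw [cl_of_ge (by linarith)]
    exact min_eq_left hs.2
  · have : (dmin (g, a) : ℝ) = dl (g * of a) := by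
      unfold dmin; simp only at h4 ⊢; rw [min_eq_right (by omega)]
    simp only
    rw [cl_of_ge (by linarith)]
    rw [max_eq_left]; linarith [hs.1]

lemma cap_compact {K : Set T} (hK : IsCompact K) : ∃ τ : ℝ, 0 ≤ τ ∧ ∀ v ∈ K, cap τ v.1 = v.1 := by
  obtain ⟨n, hn⟩ := hK.elim_directed_cover (fun n : ℕ => ⋃ h ∈ {h : G | dl h ≤ n}, star h)
    (fun n => isOpen_biUnion fun h _ => isOpen_star h)
    (fun v _ => by
      obtain ⟨h, hv⟩ := exists_star v
      exact mem_iUnion.2 ⟨dl h, mem_biUnion (by simp) hv⟩)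
    (by
      apply Monotone.directed_le
      intro m n hmn
      exact biUnion_subset_biUnion_left fun h hh => le_trans hh hmn)
  refine ⟨n + 1, by positivity, fun v hv => ?_⟩
  obtain ⟨h, hh, hv'⟩ := mem_iUnion₂.1 (hn hv)
  apply cap_star hv'
  have : (dl h : ℝ) ≤ n := by exact_mod_cast hh
  linarith

/-- A connected set of points on `x`-edges starting on the line stays on the line. -/
lemma line_connected {K : Set T} (hK : IsPreconnected K) {v : T} (hv : v ∈ K) (hl : v.1 ∈ Line)
    (hx : ∀ w ∈ K, ∃ g, ∃ s ∈ Icc (0:ℝ) 1, w.1 = ee g true s) : ∀ w ∈ K, w.1 ∈ Line := by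
  have cl1 : ∀ I : Set Ed, IsClosed (⋃ ε ∈ I, Edge ε) := by
    intro I
    rw [biUnion_eq_iUnion]
    exact (locallyFinite_Edge.comp_injective Subtype.val_injective).isClosed_iUnion
      fun i => isClosed_Edge _
  set I1 : Set Ed := {ε | ε.2 = true ∧ ε.1 ∈ Subgroup.zpowers gx}
  set I2 : Set Ed := {ε | ε.2 = true ∧ ε.1 ∉ Subgroup.zpowers gx}
  have memL : ∀ w : T, w.1 ∈ Line ↔ w ∈ ⋃ ε ∈ I1, Edge ε := by
    intro w
    simp only [mem_iUnion, Line]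
    constructor
    · rintro ⟨g, hg, s, hs, e⟩; exact ⟨(g, true), ⟨rfl, hg⟩, s, hs, e⟩
    · rintro ⟨⟨g, a⟩, ⟨rfl, hg⟩, s, hs, e⟩; exact ⟨g, hg, s, hs, e⟩
  have hd : (⋃ ε ∈ I1, Edge ε) ∩ (⋃ ε ∈ I2, Edge ε) = ∅ := by
    rw [eq_empty_iff_forall_notMem]
    rintro w ⟨h1, h2⟩
    simp only [mem_iUnion] at h1 h2
    obtain ⟨⟨g, a⟩, ⟨rfl, hg⟩, s, hs, e⟩ := h1
    obtain ⟨⟨g', a'⟩, ⟨rfl, hg'⟩, s', hs', e'⟩ := h2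
    rw [e] at e'
    simp only at hg hg' e'
    have hx : gx ∈ Subgroup.zpowers gx := Subgroup.mem_zpowers gx
    rcases ee_ker e' with ⟨rfl, -, -⟩ | ⟨h1, h2⟩
    · exact hg' hg
    · rcases ee_vertex g true s h1 with ⟨h3, -⟩ | ⟨h3, -⟩ <;>
      rcases ee_vertex g' true s' h2 with ⟨h4, -⟩ | ⟨h4, -⟩ <;>
      · rw [h3, h4] at e'
        have := V_inj e'
        apply hg'
        first
        | exact this ▸ hg
        | exact this ▸ mul_mem hg hx
        | exact (Subgroup.mul_mem_cancel_right _ hx).1 (this ▸ hg)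
        | exact (Subgroup.mul_mem_cancel_right _ hx).1 (this ▸ mul_mem hg hx)
  intro w hw
  rw [memL] at hl ⊢
  rcases (isPreconnected_iff_subset_of_disjoint_closed.1 hK) _ _ (cl1 I1) (cl1 I2) (by
    intro u hu
    obtain ⟨g, s, hs, e⟩ := hx u hu
    by_cases hg : g ∈ Subgroup.zpowers gx
    · exact Or.inl (mem_biUnion (x := (g, true)) ⟨rfl, hg⟩ ⟨s, hs, e⟩)
    · exact Or.inr (mem_biUnion (x := (g, true)) ⟨rfl, hg⟩ ⟨s, hs, e⟩)) (by rw [hd, inter_empty])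
    with h | h
  · exact h hw
  · have : v ∈ (⋃ ε ∈ I1, Edge ε) ∩ (⋃ ε ∈ I2, Edge ε) := ⟨hl, h hv⟩
    rw [hd] at this; exact absurd this (notMem_empty _)

end PMB
end

section
namespace PMB

/-- coordinates of the Möbius band in `ℂ × ℂ` -/
noncomputable def Φ (x y : ℝ) : ℂ × ℂ :=
  (Complex.exp (2 * Real.pi * x * Complex.I), y * Complex.exp (Real.pi * x * Complex.I))

lemma continuous_Φ : Continuous fun p : ℝ × ℝ => Φ p.1 p.2 := by
  unfold Φ; fun_prop

lemma exp_pi_int (n : ℤ) : Complex.exp (Real.pi * n * Complex.I) = (((-1 : ℝ) ^ n : ℝ) : ℂ) := by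
  have : (Real.pi * n * Complex.I : ℂ) = n * (Real.pi * Complex.I) := by ring
  rw [this, Complex.exp_int_mul, Complex.exp_pi_mul_I]
  push_cast; rfl

lemma Φ_shift (x y : ℝ) (n : ℤ) : Φ (x + n) y = Φ x ((-1) ^ n * y) := by
  unfold Φ
  refine Prod.ext ?_ ?_
  · simp only
    rw [Complex.exp_eq_exp_iff_exists_int]
    exact ⟨n, by push_cast; ring⟩
  · simp only
    have : (Real.pi * ((x + n : ℝ) : ℂ) * Complex.I : ℂ)
      = Real.pi * n * Complex.I + Real.pi * x * Complex.I := by push_cast; ring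
    rw [this, Complex.exp_add, exp_pi_int]
    push_cast; ring

lemma neg_one_zpow_sq (n : ℤ) : ((-1 : ℝ) ^ n) * (-1) ^ n = 1 := by
  rcases Int.even_or_odd n with h | h
  · rw [h.neg_one_zpow]; norm_num
  · rw [h.neg_one_zpow]; norm_num

lemma Φ_ker {x y x' y' : ℝ} (h : Φ x y = Φ x' y') : ∃ n : ℤ, x' = x + n ∧ y' = (-1) ^ n * y := by
  have h1 := congrArg Prod.fst h
  simp only [Φ] at h1
  rw [Complex.exp_eq_exp_iff_exists_int] at h1
  obtain ⟨n, hn⟩ := h1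
  have hx : x = x' + n := by
    have h2 : (2 * Real.pi * Complex.I : ℂ) ≠ 0 := Complex.two_pi_I_ne_zero
    have h3 : (x : ℂ) = x' + n := by
      apply mul_left_cancel₀ h2
      linear_combination hn
    exact_mod_cast h3
  have e : Φ x y = Φ x' ((-1) ^ n * y) := by rw [hx, Φ_shift]
  rw [h] at e
  have h2 := congrArg Prod.snd e
  simp only [Φ] at h2
  have h3 := mul_right_cancel₀ (Complex.exp_ne_zero _) h2
  have h4 : y' = (-1) ^ n * y := by exact_mod_cast h3
  refine ⟨-n, by push_cast; linarith, ?_⟩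
  rw [zpow_neg, h4]
  rcases Int.even_or_odd n with h | h
  · rw [h.neg_one_zpow]; norm_num
  · rw [h.neg_one_zpow]; norm_num

lemma norm_Φ (x y : ℝ) : ‖(Φ x y).2‖ = |y| := by
  unfold Φ
  simp only [norm_mul]
  have : (Real.pi * x * Complex.I : ℂ) = ((Real.pi * x : ℝ) : ℂ) * Complex.I := by push_cast; ring
  rw [this, Complex.norm_exp_ofReal_mul_I]
  simp

lemma re_Φ (x y : ℝ) : (Φ x y).1.re = Real.cos (2 * Real.pi * x) := by
  unfold Φ
  have : (2 * Real.pi * x * Complex.I : ℂ) = ((2 * Real.pi * x : ℝ) : ℂ) * Complex.I := by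
    push_cast; ring
  simp only
  rw [this, Complex.exp_ofReal_mul_I_re]

lemma Φ_rel (p q : Sq) (h : rel p q) : Φ p.1.1 p.1.2 = Φ q.1.1 q.1.2 := by
  rcases h with h | ⟨h1, h2, h3⟩ | ⟨h1, h2, h3⟩
  · rw [h]
  · have := Φ_shift 0 q.1.2 1
    rw [h1, h2, h3]; simpa using this.symm
  · have := Φ_shift 0 p.1.2 1
    rw [h1, h2, h3]; simpa using this

/-- The embedding of the Möbius band -/
noncomputable def ι : M → ℂ × ℂ := Quot.lift (fun p : Sq => Φ p.1.1 p.1.2) Φ_rel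

lemma ι_qm (p : Sq) : ι (qm p) = Φ p.1.1 p.1.2 := rfl

lemma continuous_ι : Continuous ι := by
  apply continuous_quot_lift
  exact continuous_Φ.comp continuous_subtype_val

lemma qm_surj (m : M) : ∃ p, qm p = m := Quot.exists_rep m

lemma ι_inj : Function.Injective ι := by
  intro m m' h
  obtain ⟨⟨⟨x, y⟩, hx, hy⟩, rfl⟩ := qm_surj m
  obtain ⟨⟨⟨x', y'⟩, hx', hy'⟩, rfl⟩ := qm_surj m'
  rw [ι_qm, ι_qm] at h
  obtain ⟨n, h1, h2⟩ := Φ_ker h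
  simp only [mem_Icc] at hx hx'
  simp only at h1 h2
  apply Quot.sound
  have n1 : (n : ℝ) ≤ 1 := by linarith
  have n2 : (-1 : ℝ) ≤ n := by linarith
  have n1' : n ≤ 1 := by exact_mod_cast n1
  have n2' : -1 ≤ n := by exact_mod_cast n2
  have : n = -1 ∨ n = 0 ∨ n = 1 := by omega
  rcases this with rfl | rfl | rfl
  · right; right
    norm_num at h1 h2
    simp only
    exact ⟨by linarith, by linarith, h2⟩
  · left
    norm_num at h1 h2
    simp [h1, h2]
  · right; left
    norm_num at h1 h2
    simp only
    exact ⟨by linarith, by linarith, by linarith⟩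

instance : CompactSpace Sq := by
  rw [← isCompact_iff_compactSpace]
  exact isCompact_Icc.prod isCompact_Icc

instance : CompactSpace M := inferInstanceAs (CompactSpace (Quot rel))

lemma ι_emb : Topology.IsClosedEmbedding ι :=
  continuous_ι.isClosedEmbedding ι_inj

lemma ι_surj (x y : ℝ) (hy : |y| ≤ 1) : ∃ p : Sq, Φ p.1.1 p.1.2 = Φ x y := by
  have hy' := abs_le.1 hy
  refine ⟨⟨(Int.fract x, (-1) ^ ⌊x⌋ * y), ?_, ?_⟩, ?_⟩
  · exact ⟨Int.fract_nonneg x, (Int.fract_lt_one x).le⟩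
  · simp only [mem_Icc]
    rcases Int.even_or_odd ⌊x⌋ with h | h <;> rw [h.neg_one_zpow] <;> constructor <;> linarith
  · simp only
    rw [← Φ_shift, Int.fract_add_floor]

lemma cos_neg_iff {x : ℝ} (h0 : 0 ≤ x) (h1 : x ≤ 1) :
    Real.cos (2 * Real.pi * x) < 0 ↔ |x - 1/2| < 1/4 := by
  have hp := Real.pi_pos
  rw [abs_lt]
  constructor
  · intro h
    by_contra hc
    rw [not_and_or] at hc
    push Not at hc
    have : 0 ≤ Real.cos (2 * Real.pi * x) := by
      rcases hc with hc | hc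
      · apply Real.cos_nonneg_of_neg_pi_div_two_le_of_le <;> nlinarith
      · rw [← Real.cos_sub_two_pi]
        apply Real.cos_nonneg_of_neg_pi_div_two_le_of_le <;> nlinarith
    linarith
  · rintro ⟨h2, h3⟩
    apply Real.cos_neg_of_pi_div_two_lt_of_lt <;> nlinarith

lemma mem_Bdisc (x y : ℝ) : (x, y) ∈ Bdisc ↔ |x - 1/2| < 1/4 ∧ |y| < 1/4 := by
  unfold Bdisc
  rw [Metric.mem_ball, Prod.dist_eq, max_lt_iff, Real.dist_eq, Real.dist_eq]
  simp

lemma mem_Scirc (x y : ℝ) : (x, y) ∈ Scirc ↔ max |x - 1/2| |y| = 1/4 := by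
  unfold Scirc
  rw [Metric.mem_sphere, Prod.dist_eq, Real.dist_eq, Real.dist_eq]
  simp

lemma mem_Xset (m : M) : m ∈ Xset ↔ ¬ (‖(ι m).2‖ < 1/4 ∧ (ι m).1.re < 0) := by
  have : m ∈ Xset ↔ ¬ ∃ p : Sq, p.1 ∈ Bdisc ∧ qm p = m := Iff.rfl
  rw [this, not_iff_not]
  constructor
  · rintro ⟨⟨⟨x, y⟩, hx, hy⟩, hp, rfl⟩
    rw [mem_Bdisc] at hp
    simp only at hx
    rw [ι_qm, norm_Φ, re_Φ, cos_neg_iff hx.1 hx.2]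
    exact hp.symm
  · intro h
    obtain ⟨⟨⟨x, y⟩, hx, hy⟩, rfl⟩ := qm_surj m
    simp only at hx
    rw [ι_qm, norm_Φ, re_Φ, cos_neg_iff hx.1 hx.2] at h
    exact ⟨_, (mem_Bdisc _ _).2 h.symm, rfl⟩

lemma isClosed_Xset : IsClosed Xset := by
  have : Xset = {m | 1/4 ≤ ‖(ι m).2‖} ∪ {m | 0 ≤ (ι m).1.re} := by
    ext m
    rw [mem_Xset, not_and_or, not_lt, not_lt]; rfl
  rw [this]
  have := continuous_ι
  exact (isClosed_le continuous_const (by fun_prop)).union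
    (isClosed_le continuous_const (by fun_prop))

instance : CompactSpace X := isCompact_iff_compactSpace.1 isClosed_Xset.isCompact

/-- embedding of `X` -/
noncomputable def ιX (x : X) : ℂ × ℂ := ι x.1

lemma ιX_emb : Topology.IsEmbedding ιX := ι_emb.isEmbedding.comp Topology.IsEmbedding.subtypeVal

lemma ιX_inj : Function.Injective ιX := ιX_emb.injective

lemma continuous_ιX : Continuous ιX := ιX_emb.continuous

instance : T2Space X := T2Space.of_injective_continuous ιX_inj continuous_ιX

instance : Nonempty X := by
  have h0 : ((0:ℝ), (0:ℝ)) ∈ Sq := by simp [Sq]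
  refine ⟨⟨qm ⟨(0, 0), h0⟩, ?_⟩⟩
  rw [mem_Xset, ι_qm, re_Φ]
  simp

open Classical in
/-- points of `X` from their coordinates -/
noncomputable def mkX (p : ℂ × ℂ) : X :=
  if h : ∃ x, ιX x = p then h.choose else Classical.arbitrary X

lemma ι_mkX {p : ℂ × ℂ} (h : p ∈ range ιX) : ιX (mkX p) = p := by
  unfold mkX
  have h' : ∃ x, ιX x = p := h
  rw [dif_pos h']
  exact h'.choose_spec

lemma mkX_ι (z : X) : mkX (ιX z) = z := ιX_inj (ι_mkX ⟨z, rfl⟩)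

lemma continuous_mkX {W : Type*} [TopologicalSpace W] {φ : W → ℂ × ℂ} (hc : Continuous φ)
    (h : ∀ w, φ w ∈ range ιX) : Continuous fun w => mkX (φ w) := by
  rw [ιX_emb.continuous_iff]
  convert hc using 1
  funext w
  exact ι_mkX (h w)

/-- admissible coordinates -/
def ok (x y : ℝ) : Prop := |y| ≤ 1 ∧ ¬ (|y| < 1/4 ∧ Real.cos (2 * Real.pi * x) < 0)

lemma ok_range {x y : ℝ} (h : ok x y) : Φ x y ∈ range ιX := by
  obtain ⟨p, hp⟩ := ι_surj x y h.1
  refine ⟨⟨qm p, ?_⟩, ?_⟩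
  · rw [mem_Xset, ι_qm, hp, norm_Φ, re_Φ]; exact h.2
  · exact hp

/-- point with given coordinates -/
noncomputable def pt (x y : ℝ) : X := mkX (Φ x y)

lemma ι_pt {x y : ℝ} (h : ok x y) : ιX (pt x y) = Φ x y := ι_mkX (ok_range h)

lemma pt_surj (z : X) : ∃ x y, 0 ≤ x ∧ x ≤ 1 ∧ ok x y ∧ z = pt x y ∧
    ∃ p : Sq, p.1 = (x, y) ∧ qm p = z.1 := by
  obtain ⟨m, hm⟩ := z
  obtain ⟨⟨⟨x, y⟩, hx, hy⟩, rfl⟩ := qm_surj m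
  simp only [mem_Icc] at hx hy
  have hok : ok x y := by
    refine ⟨abs_le.2 hy, ?_⟩
    rw [mem_Xset, ι_qm, norm_Φ, re_Φ] at hm
    exact hm
  refine ⟨x, y, hx.1, hx.2, hok, ?_, ⟨⟨(x, y), hx, hy⟩, rfl, rfl⟩⟩
  apply ιX_inj
  rw [ι_pt hok]; rfl

/-- distance to the core circle -/
noncomputable def η (z : X) : ℝ := ‖(ιX z).2‖

lemma continuous_η : Continuous η := by
  have := continuous_ιX
  unfold η; fun_prop

lemma η_pt {x y : ℝ} (h : ok x y) : η (pt x y) = |y| := by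
  unfold η; rw [ι_pt h, norm_Φ]

lemma η_nonneg (z : X) : 0 ≤ η z := norm_nonneg _

lemma η_le_one (z : X) : η z ≤ 1 := by
  obtain ⟨x, y, -, -, h, rfl, -⟩ := pt_surj z
  rw [η_pt h]; exact h.1

lemma mem_C1 (z : X) : z ∈ C1 ↔ η z = 1 := by
  constructor
  · rintro ⟨p, hp, h⟩
    unfold η ιX
    rw [← hp, ι_qm, norm_Φ]
    rcases h with h | h <;> rw [h] <;> norm_num
  · intro h
    obtain ⟨x, y, -, -, hok, rfl, p, hp, hq⟩ := pt_surj z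
    rw [η_pt hok] at h
    refine ⟨p, hq, ?_⟩
    rw [hp]
    exact eq_or_eq_neg_of_abs_eq h

lemma C2_spec {z : X} (h : z ∈ C2) :
    ∃ x y, ok x y ∧ z = pt x y ∧ max |x - 1/2| |y| = 1/4 := by
  obtain ⟨⟨⟨x, y⟩, hx, hy⟩, hq, hs⟩ := h
  rw [mem_Scirc] at hs
  simp only [mem_Icc] at hx hy
  have hok : ok x y := by
    refine ⟨abs_le.2 hy, ?_⟩
    have hm := z.2
    rw [← hq, mem_Xset, ι_qm, norm_Φ, re_Φ] at hm
    exact hm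
  refine ⟨x, y, hok, ?_, hs⟩
  apply ιX_inj
  rw [ι_pt hok]; unfold ιX; rw [← hq]; rfl

lemma pt_mem_C2 {x y : ℝ} (hok : ok x y) (h : max |x - 1/2| |y| = 1/4) : pt x y ∈ C2 := by
  have h1 := abs_le.1 ((le_max_left _ _).trans h.le)
  have h2 := abs_le.1 ((le_max_right _ _).trans h.le)
  have hS : (x, y) ∈ Sq := by
    constructor
    · exact ⟨by linarith, by linarith⟩
    · exact ⟨by simp only; linarith, by simp only; linarith⟩
  refine ⟨⟨(x, y), hS⟩, ?_, (mem_Scirc _ _).2 h⟩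
  apply ι_inj
  exact (ι_pt hok).symm

lemma η_C2 {z : X} (h : z ∈ C2) : η z ≤ 1/4 := by
  obtain ⟨x, y, hok, rfl, h2⟩ := C2_spec h
  rw [η_pt hok, ← h2]; exact le_max_right _ _

/-- scaling factor -/
noncomputable def ψ (t r : ℝ) : ℝ :=
  min 1 (max r (1/4) + max t (-1) * (max r (1/4) - 1/4)) / max r (1/4)

lemma ψ_small {t r : ℝ} (h : r ≤ 1/4) : ψ t r = 1 := by
  unfold ψ; rw [max_eq_right h]; norm_num

lemma ψ_large {t r : ℝ} (h : 1/4 ≤ r) : ψ t r * r = min 1 (r + max t (-1) * (r - 1/4)) := by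
  unfold ψ; rw [max_eq_left h]
  have : r ≠ 0 := by linarith
  field_simp

lemma ψ_nonneg {t r : ℝ} : 0 ≤ ψ t r := by
  unfold ψ
  have h1 : 1/4 ≤ max r (1/4) := le_max_right _ _
  have h2 : -1 ≤ max t (-1) := le_max_right _ _
  apply div_nonneg
  · apply le_min (by norm_num); nlinarith
  · linarith

lemma ψ_ge {t r : ℝ} (h : 1/4 ≤ r) : 1/4 ≤ ψ t r * r := by
  rw [ψ_large h]
  have h2 : -1 ≤ max t (-1) := le_max_right _ _
  apply le_min (by norm_num); nlinarith

lemma ψ_le {t r : ℝ} (h : r ≤ 1) : ψ t r * r ≤ 1 := by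
  rcases le_total r (1/4) with h1 | h1
  · rw [ψ_small h1]; linarith
  · rw [ψ_large h1]; exact min_le_left _ _

/-- the scaling maps -/
noncomputable def Zm (t : ℝ) (z : X) : X := mkX ((ιX z).1, (ψ t (η z) : ℂ) * (ιX z).2)

lemma Zm_ok {x y t : ℝ} (h : ok x y) : ok x (ψ t |y| * y) := by
  have e : |ψ t |y| * y| = ψ t |y| * |y| := by rw [abs_mul, abs_of_nonneg ψ_nonneg]
  refine ⟨by rw [e]; exact ψ_le h.1, ?_⟩
  rintro ⟨h1, h2⟩
  rw [e] at h1
  rcases lt_or_ge |y| (1/4) with h3 | h3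
  · exact h.2 ⟨h3, h2⟩
  · have := ψ_ge (t := t) h3; linarith

lemma Zm_eq {x y t : ℝ} (h : ok x y) :
    ((ιX (pt x y)).1, (ψ t (η (pt x y)) : ℂ) * (ιX (pt x y)).2) = Φ x (ψ t |y| * y) := by
  rw [η_pt h, ι_pt h]
  unfold Φ
  refine Prod.ext rfl ?_
  simp only
  push_cast; ring

lemma Zm_range (t : ℝ) (z : X) : ((ιX z).1, (ψ t (η z) : ℂ) * (ιX z).2) ∈ range ιX := by
  obtain ⟨x, y, -, -, h, rfl, -⟩ := pt_surj z
  rw [Zm_eq h]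
  exact ok_range (Zm_ok h)

lemma continuous_Zm : Continuous fun p : ℝ × X => Zm p.1 p.2 := by
  have h1 := continuous_ιX
  have h2 := continuous_η
  have h3 : Continuous fun p : ℝ × ℝ => ψ p.1 p.2 := by
    unfold ψ
    apply Continuous.div (by fun_prop) (by fun_prop)
    intro p
    have : 1/4 ≤ max p.2 (1/4) := le_max_right _ _
    linarith
  have h4 : Continuous fun p : ℝ × X => ψ p.1 (η p.2) :=
    h3.comp (continuous_fst.prodMk (h2.comp continuous_snd))
  have h5 : Continuous fun p : ℝ × X => ((ιX p.2).1, (ψ p.1 (η p.2) : ℂ) * (ιX p.2).2) := by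
    fun_prop
  exact continuous_mkX h5 (fun p => Zm_range p.1 p.2)

lemma Zm_small {t : ℝ} {z : X} (h : η z ≤ 1/4) : Zm t z = z := by
  unfold Zm
  rw [ψ_small h]
  simp [mkX_ι]

lemma η_Zm {t : ℝ} {z : X} (h : 1/4 ≤ η z) : η (Zm t z) = min 1 (η z + max t (-1) * (η z - 1/4)) := by
  rw [← ψ_large h]
  have : η (Zm t z) = ‖((ψ t (η z) : ℂ) * (ιX z).2)‖ := by
    change ‖(ιX (mkX _)).2‖ = _
    rw [ι_mkX (Zm_range t z)]
  rw [this, norm_mul, Complex.norm_real, Real.norm_of_nonneg ψ_nonneg]; rfl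

lemma η_Zm_small {t : ℝ} {z : X} (h : η z ≤ 1/4) : η (Zm t z) = η z := by rw [Zm_small h]

lemma Zm_zero (z : X) : Zm 0 z = z := by
  rcases le_total (η z) (1/4) with h | h
  · exact Zm_small h
  · unfold Zm
    have : ψ 0 (η z) = 1 := by
      have h1 := ψ_large (t := 0) h
      have h2 := η_le_one z
      have h3 : max (0:ℝ) (-1) = 0 := by norm_num
      rw [h3] at h1
      rw [min_eq_right (by linarith)] at h1
      have : η z ≠ 0 := by linarith
      apply mul_right_cancel₀ this
      linarith
    rw [this]; simp [mkX_ι]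

end PMB
end

section
namespace PMB

/-- first coordinate of the boundary of the triangle -/
noncomputable def bu (θ : ℝ) : ℝ := min (θ - 1) (5 - 2 * θ)
/-- second coordinate of the boundary of the triangle -/
noncomputable def bv (θ : ℝ) : ℝ := max (-1) (min (2 * θ - 1) (3 - 2 * θ))

lemma b_cases {θ : ℝ} (h0 : 0 ≤ θ) (h3 : θ ≤ 3) :
    (θ ≤ 1 ∧ bu θ = θ - 1 ∧ bv θ = 2 * θ - 1) ∨
    (1 ≤ θ ∧ θ ≤ 2 ∧ bu θ = θ - 1 ∧ bv θ = 3 - 2 * θ) ∨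
    (2 ≤ θ ∧ bu θ = 5 - 2 * θ ∧ bv θ = -1) := by
  unfold bu bv
  rcases le_total θ 1 with h | h
  · left
    refine ⟨h, min_eq_left (by linarith), ?_⟩
    rw [min_eq_left (by linarith), max_eq_right (by linarith)]
  · rcases le_total θ 2 with h' | h'
    · right; left
      refine ⟨h, h', min_eq_left (by linarith), ?_⟩
      rw [min_eq_right (by linarith), max_eq_right (by linarith)]
    · right; right
      refine ⟨h', min_eq_right (by linarith), ?_⟩
      rw [min_eq_right (by linarith), max_eq_left (by linarith)]

/-- gauge of the triangle -/
noncomputable def mu (u v : ℝ) : ℝ := max (-v) (v + 2 * |u|)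

lemma mu_b {θ : ℝ} (h0 : 0 ≤ θ) (h3 : θ ≤ 3) : mu (bu θ) (bv θ) = 1 := by
  unfold mu
  rcases b_cases h0 h3 with ⟨h, h1, h2⟩ | ⟨h, h', h1, h2⟩ | ⟨h, h1, h2⟩
  · rw [h1, h2, abs_of_nonpos (by linarith), max_eq_right] <;> linarith
  · rw [h1, h2, abs_of_nonneg (by linarith), max_eq_right] <;> linarith
  · rw [h1, h2, max_eq_left] <;> norm_num
    rw [abs_le]; constructor <;> linarith

lemma mu_smul {c : ℝ} (hc : 0 ≤ c) (u v : ℝ) : mu (c * u) (c * v) = c * mu u v := by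
  unfold mu
  rw [mul_max_of_nonneg _ _ hc, abs_mul, abs_of_nonneg hc]
  congr 1 <;> ring

/-- norm of the boundary point -/
noncomputable def nb (θ : ℝ) : ℝ := max |bu θ| |bv θ|

lemma nb_ge {θ : ℝ} (h0 : 0 ≤ θ) (h3 : θ ≤ 3) : 1/3 ≤ nb θ := by
  have h1 : |bu θ| ≤ nb θ := le_max_left _ _
  have h2 : |bv θ| ≤ nb θ := le_max_right _ _
  have h4 := mu_b h0 h3
  have h5 : mu (bu θ) (bv θ) ≤ nb θ + 2 * nb θ := by
    unfold mu
    have := neg_abs_le (bv θ)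
    have := le_abs_self (bv θ)
    have := abs_nonneg (bu θ)
    apply max_le <;> linarith
  linarith

/-- inner radius -/
noncomputable def kp (θ : ℝ) : ℝ := 1 / (4 * nb θ)

lemma kp_pos {θ : ℝ} (h0 : 0 ≤ θ) (h3 : θ ≤ 3) : 0 < kp θ := by
  have := nb_ge h0 h3
  unfold kp; positivity

lemma kp_le {θ : ℝ} (h0 : 0 ≤ θ) (h3 : θ ≤ 3) : kp θ ≤ 3/4 := by
  have := nb_ge h0 h3
  unfold kp
  rw [div_le_iff₀ (by linarith)]; linarith

lemma kp_nb {θ : ℝ} (h0 : 0 ≤ θ) (h3 : θ ≤ 3) : kp θ * nb θ = 1/4 := by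
  have := nb_ge h0 h3
  unfold kp
  field_simp

/-- radius -/
noncomputable def cc (θ l : ℝ) : ℝ := (1 - l) * kp θ + l

lemma cc_bounds {θ l : ℝ} (h0 : 0 ≤ θ) (h3 : θ ≤ 3) (l0 : 0 ≤ l) (l1 : l ≤ 1) :
    kp θ ≤ cc θ l ∧ cc θ l ≤ 1 := by
  have h1 := kp_pos h0 h3
  have h2 := kp_le h0 h3
  unfold cc
  constructor <;> nlinarith

lemma cc_inj {θ l l' : ℝ} (h0 : 0 ≤ θ) (h3 : θ ≤ 3) (h : cc θ l = cc θ l') : l = l' := by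
  have h2 := kp_le h0 h3
  unfold cc at h
  have h4 : (l - l') * (1 - kp θ) = 0 := by linarith
  rcases mul_eq_zero.1 h4 with h | h
  · linarith
  · linarith

lemma cc_one (θ : ℝ) : cc θ 1 = 1 := by unfold cc; ring
lemma cc_zero (θ : ℝ) : cc θ 0 = kp θ := by unfold cc; ring

lemma tri_ok {u v : ℝ} (h : mu u v ≤ 1) (hn : 1/4 ≤ max |u| |v|) : ok (1/2 + u) v := by
  have h1 : -v ≤ 1 := (le_max_left _ _).trans h
  have h2 : v + 2 * |u| ≤ 1 := (le_max_right _ _).trans h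
  have h3 := abs_nonneg u
  refine ⟨abs_le.2 ⟨by linarith, by linarith⟩, ?_⟩
  rintro ⟨h4, h5⟩
  have h6 : 1/4 ≤ |u| := by
    rcases le_max_iff.1 hn with h | h
    · exact h
    · linarith
  have h7 := (abs_lt.1 h4).1
  have h8 : Real.cos (2 * Real.pi * |u|) ≤ 0 := by
    have hp := Real.pi_pos
    apply Real.cos_nonpos_of_pi_div_two_le_of_le <;> nlinarith
  have h9 : Real.cos (2 * Real.pi * (1/2 + u)) = - Real.cos (2 * Real.pi * |u|) := by
    have e1 : Real.cos (2 * Real.pi * |u|) = Real.cos (2 * Real.pi * u) := by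
      rcases abs_choice u with h | h <;> rw [h]
      rw [mul_neg, Real.cos_neg]
    rw [e1, ← Real.cos_add_pi]; congr 1; ring
  linarith

/-- clamp to `[0,3]` -/
noncomputable def c3 (x : ℝ) : ℝ := max 0 (min 3 x)

lemma c3_mem (x : ℝ) : 0 ≤ c3 x ∧ c3 x ≤ 3 := by
  unfold c3; constructor
  · exact le_max_left _ _
  · simp

lemma c3_of_mem {x : ℝ} (h0 : 0 ≤ x) (h1 : x ≤ 3) : c3 x = x := by
  unfold c3; rw [min_eq_right h1, max_eq_right h0]

/-- The polar coordinates on `X`. -/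
noncomputable def Q (θ l : ℝ) : X :=
  pt (1/2 + cc (c3 θ) (cl l) * bu (c3 θ)) (cc (c3 θ) (cl l) * bv (c3 θ))

lemma Q_ok (θ l : ℝ) :
    ok (1/2 + cc (c3 θ) (cl l) * bu (c3 θ)) (cc (c3 θ) (cl l) * bv (c3 θ)) := by
  obtain ⟨h0, h3⟩ := c3_mem θ
  obtain ⟨l0, l1⟩ := cl_mem l
  obtain ⟨h1, h2⟩ := cc_bounds h0 h3 l0 l1
  have h4 := kp_pos h0 h3
  apply tri_ok
  · rw [mu_smul (by linarith), mu_b h0 h3]; linarith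
  · rw [abs_mul, abs_mul, ← mul_max_of_nonneg _ _ (abs_nonneg _), abs_of_pos (by linarith)]
    rw [← kp_nb h0 h3]
    have := nb_ge h0 h3
    exact mul_le_mul_of_nonneg_right h1 (by linarith)

lemma continuous_Q : Continuous fun p : ℝ × ℝ => Q p.1 p.2 := by
  have h1 : Continuous fun p : ℝ × ℝ => c3 p.1 := by unfold c3; fun_prop
  have h2 : Continuous fun p : ℝ × ℝ => cl p.2 := continuous_cl.comp continuous_snd
  have hu : Continuous bu := by unfold bu; fun_prop
  have hv : Continuous bv := by unfold bv; fun_prop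
  have hk : Continuous fun p : ℝ × ℝ => kp (c3 p.1) := by
    unfold kp nb
    apply Continuous.div continuous_const (by fun_prop)
    intro p
    have : 1/3 ≤ nb (c3 p.1) := nb_ge (c3_mem _).1 (c3_mem _).2
    unfold nb at this
    linarith
  have hcc : Continuous fun p : ℝ × ℝ => cc (c3 p.1) (cl p.2) := by
    unfold cc; fun_prop
  have h3 : Continuous fun p : ℝ × ℝ => Φ (1/2 + cc (c3 p.1) (cl p.2) * bu (c3 p.1))
      (cc (c3 p.1) (cl p.2) * bv (c3 p.1)) := by
    have := continuous_Φ.comp (f := fun p : ℝ × ℝ => (1/2 + cc (c3 p.1) (cl p.2) * bu (c3 p.1),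
      cc (c3 p.1) (cl p.2) * bv (c3 p.1))) (by fun_prop)
    exact this
  exact continuous_mkX h3 fun p => ok_range (Q_ok p.1 p.2)

lemma Q_eq {θ l : ℝ} (h0 : 0 ≤ θ) (h3 : θ ≤ 3) (l0 : 0 ≤ l) (l1 : l ≤ 1) :
    Q θ l = pt (1/2 + cc θ l * bu θ) (cc θ l * bv θ) := by
  unfold Q; rw [c3_of_mem h0 h3, cl_of_mem ⟨l0, l1⟩]

lemma Q_ok' {θ l : ℝ} (h0 : 0 ≤ θ) (h3 : θ ≤ 3) (l0 : 0 ≤ l) (l1 : l ≤ 1) :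
    ok (1/2 + cc θ l * bu θ) (cc θ l * bv θ) := by
  have := Q_ok θ l
  rwa [c3_of_mem h0 h3, cl_of_mem ⟨l0, l1⟩] at this

lemma b_zero_three : bu 0 = -1 ∧ bv 0 = -1 ∧ bu 3 = -1 ∧ bv 3 = -1 := by
  unfold bu bv; norm_num

lemma Q_zero_three (l : ℝ) : Q 0 l = Q 3 l := by
  obtain ⟨h1, h2, h3, h4⟩ := b_zero_three
  unfold Q
  rw [c3_of_mem le_rfl (by norm_num), c3_of_mem (by norm_num) le_rfl]
  unfold cc kp nb
  rw [h1, h2, h3, h4]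

lemma Q_side {s : ℝ} (h0 : 0 ≤ s) (h1 : s ≤ 1) : Q s 1 = Q (s + 1) 1 := by
  rw [Q_eq h0 (by linarith) (by norm_num) le_rfl,
    Q_eq (by linarith) (by linarith) (by norm_num) le_rfl, cc_one, cc_one]
  have e1 : bu s = s - 1 ∧ bv s = 2 * s - 1 := by
    unfold bu bv
    rw [min_eq_left (by linarith), min_eq_left (by linarith), max_eq_right (by linarith)]
    exact ⟨rfl, rfl⟩
  have e2 : bu (s + 1) = s ∧ bv (s + 1) = 1 - 2 * s := by
    unfold bu bv
    rw [min_eq_left (by linarith), min_eq_right (by linarith), max_eq_right (by linarith)]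
    constructor <;> ring
  unfold pt
  congr 1
  rw [e1.1, e1.2, e2.1, e2.2]
  have := Φ_shift (1/2 + 1 * (s - 1)) (1 * (1 - 2 * s)) 1
  norm_num at this ⊢
  rw [show (1/2 + s : ℝ) = 1/2 + (s - 1) + 1 by ring, this]

lemma b_inj {θ θ' : ℝ} (h0 : 0 ≤ θ) (h3 : θ ≤ 3) (h0' : 0 ≤ θ') (h3' : θ' ≤ 3)
    (hu : bu θ = bu θ') (hv : bv θ = bv θ') :
    θ = θ' ∨ (θ = 0 ∧ θ' = 3) ∨ (θ = 3 ∧ θ' = 0) := by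
  rcases b_cases h0 h3 with ⟨h, h1, h2⟩ | ⟨h, h', h1, h2⟩ | ⟨h, h1, h2⟩ <;>
  rcases b_cases h0' h3' with ⟨k, k1, k2⟩ | ⟨k, k', k1, k2⟩ | ⟨k, k1, k2⟩ <;>
  rw [h1, k1] at hu <;> rw [h2, k2] at hv <;>
  first
  | (left; linarith)
  | (right; left; constructor <;> linarith)
  | (right; right; constructor <;> linarith)

lemma b_left {θ : ℝ} (h0 : 0 ≤ θ) (h3 : θ ≤ 3) (hu : bu θ ≤ 0) (h : bv θ + 2 * |bu θ| = 1) :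
    (θ ≤ 1 ∧ bu θ = θ - 1) ∨ (θ = 3 ∧ bu θ = -1) := by
  rcases b_cases h0 h3 with ⟨h', h1, h2⟩ | ⟨h', h'', h1, h2⟩ | ⟨h', h1, h2⟩
  · exact Or.inl ⟨h', h1⟩
  · left; exact ⟨by linarith, h1⟩
  · right; rw [h2, abs_of_nonpos hu] at h
    constructor <;> linarith

lemma b_right {θ : ℝ} (h0 : 0 ≤ θ) (h3 : θ ≤ 3) (hu : 0 ≤ bu θ) (h : bv θ + 2 * |bu θ| = 1) :
    1 ≤ θ ∧ θ ≤ 2 ∧ bu θ = θ - 1 := by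
  rcases b_cases h0 h3 with ⟨h', h1, h2⟩ | ⟨h', h'', h1, h2⟩ | ⟨h', h1, h2⟩
  · exact ⟨by linarith, by linarith, h1⟩
  · exact ⟨h', h'', h1⟩
  · rw [h2, abs_of_nonneg hu] at h
    refine ⟨?_, ?_, ?_⟩ <;> linarith

lemma Q_ker_aux {θ l θ' l' : ℝ} (h0 : 0 ≤ θ) (h3 : θ ≤ 3) (l0 : 0 ≤ l) (l1 : l ≤ 1)
    (h0' : 0 ≤ θ') (h3' : θ' ≤ 3) (l0' : 0 ≤ l') (l1' : l' ≤ 1) {n : ℤ} (hn0 : 0 ≤ n)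
    (e1 : 1/2 + cc θ' l' * bu θ' = 1/2 + cc θ l * bu θ + n)
    (e2 : cc θ' l' * bv θ' = (-1) ^ n * (cc θ l * bv θ))
    {Y : Type*} {F : ℝ → ℝ → Y}
    (Fa : ∀ l, 0 ≤ l → l ≤ 1 → F 0 l = F 3 l) (Fb : ∀ s, 0 ≤ s → s ≤ 1 → F s 1 = F (s + 1) 1) :
    F θ l = F θ' l' := by
  have cp : 0 < cc θ l := (kp_pos h0 h3).trans_le (cc_bounds h0 h3 l0 l1).1
  have cp' : 0 < cc θ' l' := (kp_pos h0' h3').trans_le (cc_bounds h0' h3' l0' l1').1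
  have c1 : cc θ l ≤ 1 := (cc_bounds h0 h3 l0 l1).2
  have c1' : cc θ' l' ≤ 1 := (cc_bounds h0' h3' l0' l1').2
  have m : mu (cc θ l * bu θ) (cc θ l * bv θ) = cc θ l := by
    rw [mu_smul cp.le, mu_b h0 h3, mul_one]
  have m' : mu (cc θ' l' * bu θ') (cc θ' l' * bv θ') = cc θ' l' := by
    rw [mu_smul cp'.le, mu_b h0' h3', mul_one]
  have one : ∀ {θ l : ℝ}, 0 ≤ θ → θ ≤ 3 → cc θ l = 1 → l = 1 := by
    intro θ l h0 h3 h
    apply cc_inj h0 h3; rw [h, cc_one]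
  set u := cc θ l * bu θ with hu
  set v := cc θ l * bv θ with hv
  set u' := cc θ' l' * bu θ' with hu'
  set v' := cc θ' l' * bv θ' with hv'
  have a1 : -v ≤ cc θ l := m ▸ le_max_left _ _
  have a2 : v + 2 * |u| ≤ cc θ l := m ▸ le_max_right _ _
  have a1' : -v' ≤ cc θ' l' := m' ▸ le_max_left _ _
  have a2' : v' + 2 * |u'| ≤ cc θ' l' := m' ▸ le_max_right _ _
  have b1 := neg_abs_le u
  have b2 := le_abs_self u'
  have hn : (n : ℝ) ≤ 2 := by linarith
  have hn' : n ≤ 2 := by exact_mod_cast hn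
  have : n = 0 ∨ n = 1 ∨ n = 2 := by omega
  rcases this with rfl | rfl | rfl
  · norm_num at e1 e2
    have hc : cc θ l = cc θ' l' := by rw [← m, ← m', e1, e2]
    have k1 : bu θ = bu θ' := by
      apply mul_left_cancel₀ cp.ne'
      rw [← hu, ← e1, hu', hc]
    have k2 : bv θ = bv θ' := by
      apply mul_left_cancel₀ cp.ne'
      rw [← hv, ← e2, hv', hc]
    obtain ⟨g1, g2, g3, g4⟩ := b_zero_three
    have kk : cc 0 = cc 3 := by funext l; unfold cc kp nb; rw [g1, g2, g3, g4]
    rcases b_inj h0 h3 h0' h3' k1 k2 with rfl | ⟨rfl, rfl⟩ | ⟨rfl, rfl⟩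
    · rw [cc_inj h0 h3 hc]
    · rw [kk] at hc
      rw [cc_inj h0' h3' hc]; exact Fa _ l0' l1'
    · rw [kk] at hc
      rw [cc_inj h0 h3 hc]; exact (Fa _ l0' l1').symm
  · norm_num at e1 e2
    have q1 : cc θ l = 1 := by linarith
    have q1' : cc θ' l' = 1 := by linarith
    have r1 := one h0 h3 q1
    have r1' := one h0' h3' q1'
    rw [q1, one_mul] at hu hv
    rw [q1', one_mul] at hu' hv'
    have w1 : |u| = -u := by linarith
    have w2 : |u'| = u' := by linarith
    have s1 : u ≤ 0 := abs_eq_neg_self.1 w1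
    have s2 : 0 ≤ u' := abs_eq_self.1 w2
    have t1 := b_left h0 h3 (hu ▸ s1) (by rw [← hu, ← hv]; linarith)
    have t2 := b_right h0' h3' (hu' ▸ s2) (by rw [← hu', ← hv']; linarith)
    rw [← hu] at t1
    rw [← hu'] at t2
    rw [r1, r1']
    rcases t1 with ⟨t1, t3⟩ | ⟨t1, t3⟩
    · have : θ' = θ + 1 := by linarith
      rw [this]; exact Fb _ h0 t1
    · have : θ' = 1 := by linarith
      rw [this, t1, ← Fa 1 (by norm_num) le_rfl, Fb 0 le_rfl (by norm_num)]; norm_num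
  · norm_num at e1 e2
    have q1 : cc θ l = 1 := by linarith
    have q1' : cc θ' l' = 1 := by linarith
    have r1 := one h0 h3 q1
    have r1' := one h0' h3' q1'
    rw [q1, one_mul] at hu hv
    rw [q1', one_mul] at hu' hv'
    have w1 : |u| = -u := by linarith
    have w2 : |u'| = u' := by linarith
    have s1 : u ≤ 0 := abs_eq_neg_self.1 w1
    have s2 : 0 ≤ u' := abs_eq_self.1 w2
    have t1 := b_left h0 h3 (hu ▸ s1) (by rw [← hu, ← hv]; linarith)
    have t2 := b_right h0' h3' (hu' ▸ s2) (by rw [← hu', ← hv']; linarith)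
    rw [← hu] at t1
    rw [← hu'] at t2
    rw [r1, r1']
    have f1 := Fa 1 (by norm_num) le_rfl
    have f2 := Fb 0 le_rfl (by norm_num)
    have f3 := Fb 1 (by norm_num) le_rfl
    norm_num at f2 f3
    have : θ' = 2 := by linarith
    rcases t1 with ⟨t1, t3⟩ | ⟨t1, t3⟩
    · have hθ : θ = 0 := by linarith
      rw [hθ, this, f2, f3]
    · rw [t1, this, ← f1, f2, f3]

lemma Q_ker {θ l θ' l' : ℝ} (h0 : 0 ≤ θ) (h3 : θ ≤ 3) (l0 : 0 ≤ l) (l1 : l ≤ 1)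
    (h0' : 0 ≤ θ') (h3' : θ' ≤ 3) (l0' : 0 ≤ l') (l1' : l' ≤ 1) (h : Q θ l = Q θ' l')
    {Y : Type*} {F : ℝ → ℝ → Y}
    (Fa : ∀ l, 0 ≤ l → l ≤ 1 → F 0 l = F 3 l) (Fb : ∀ s, 0 ≤ s → s ≤ 1 → F s 1 = F (s + 1) 1) :
    F θ l = F θ' l' := by
  rw [Q_eq h0 h3 l0 l1, Q_eq h0' h3' l0' l1'] at h
  have h4 := congrArg ιX h
  rw [ι_pt (Q_ok' h0 h3 l0 l1), ι_pt (Q_ok' h0' h3' l0' l1')] at h4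
  obtain ⟨n, e1, e2⟩ := Φ_ker h4
  rcases le_total 0 n with hn | hn
  · exact Q_ker_aux h0 h3 l0 l1 h0' h3' l0' l1' hn e1 e2 Fa Fb
  · symm
    obtain ⟨n, e1, e2⟩ := Φ_ker h4.symm
    rcases le_total 0 n with hn' | hn'
    · exact Q_ker_aux h0' h3' l0' l1' h0 h3 l0 l1 hn' e1 e2 Fa Fb
    · obtain ⟨m, e1', e2'⟩ := Φ_ker h4
      have : m = -n := by
        have : (m : ℝ) = -n := by linarith
        exact_mod_cast this
      symm
      exact Q_ker_aux h0 h3 l0 l1 h0' h3' l0' l1' (n := m) (by omega) e1' e2' Fa Fb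

lemma b_surj {u v : ℝ} (h : mu u v = 1) :
    ∃ θ, 0 ≤ θ ∧ θ ≤ 3 ∧ bu θ = u ∧ bv θ = v ∧ (v = -1 → 2 ≤ θ) := by
  have h1 : -v ≤ 1 := h ▸ le_max_left _ _
  have h2 : v + 2 * |u| ≤ 1 := h ▸ le_max_right _ _
  have hu := abs_nonneg u
  by_cases hv : v = -1
  · have h3 := abs_le.1 (show |u| ≤ 1 by linarith)
    refine ⟨(5 - u) / 2, by linarith, by linarith, ?_, ?_, fun _ => by linarith⟩
    · unfold bu; rw [min_eq_right] <;> linarith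
    · unfold bv; rw [max_eq_left, hv]; apply (min_le_right _ _).trans; linarith
  · have h3 : v + 2 * |u| = 1 := by
      rcases max_choice (-v) (v + 2 * |u|) with h4 | h4
      · exact absurd (by unfold mu at h; linarith) hv
      · unfold mu at h; linarith
    have h5 : |u| ≤ 1 := by linarith
    obtain ⟨h6, h7⟩ := abs_le.1 h5
    refine ⟨u + 1, by linarith, by linarith, ?_, ?_, fun h => absurd h hv⟩
    · unfold bu; rw [min_eq_left] <;> linarith
    · unfold bv
      rcases le_total u 0 with h | h
      · rw [abs_of_nonpos h] at h3
        rw [min_eq_left (by linarith), max_eq_right] <;> linarith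
      · rw [abs_of_nonneg h] at h3
        rw [min_eq_right (by linarith), max_eq_right] <;> linarith

lemma tri_surj {u v : ℝ} (h : mu u v ≤ 1) (hn : 1/4 ≤ max |u| |v|) :
    ∃ θ l, 0 ≤ θ ∧ θ ≤ 3 ∧ 0 ≤ l ∧ l ≤ 1 ∧ Q θ l = pt (1/2 + u) v ∧
      (max |u| |v| = 1/4 → l = 0) ∧ (v = -1 → 2 ≤ θ ∧ l = 1) := by
  have h1 : -v ≤ mu u v := le_max_left _ _
  have h2 : v + 2 * |u| ≤ mu u v := le_max_right _ _
  have hu := abs_nonneg u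
  set c := mu u v with hc
  have cpos : 0 < c := by
    by_contra hcn
    have : |u| = 0 := by linarith
    have hv : v = 0 := by linarith
    rw [this, hv] at hn
    norm_num at hn
  have hm : mu (u / c) (v / c) = 1 := by
    have : mu (c⁻¹ * u) (c⁻¹ * v) = c⁻¹ * mu u v := mu_smul (by positivity) u v
    rw [div_eq_inv_mul, div_eq_inv_mul, this, ← hc]
    field_simp
  obtain ⟨θ, t0, t3, eu, ev, t2⟩ := b_surj hm
  have eu' : u = c * bu θ := by rw [eu]; field_simp
  have ev' : v = c * bv θ := by rw [ev]; field_simp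
  have hnb : max |u| |v| = c * nb θ := by
    rw [eu', ev', abs_mul, abs_mul, abs_of_pos cpos, ← mul_max_of_nonneg _ _ cpos.le]; rfl
  have nbp := nb_ge t0 t3
  have kn := kp_nb t0 t3
  have kl := kp_le t0 t3
  have hk : kp θ ≤ c := by
    rw [hnb, ← kn] at hn
    exact le_of_mul_le_mul_right hn (by linarith)
  have hcc : cc θ ((c - kp θ) / (1 - kp θ)) = c := by
    unfold cc
    have : 1 - kp θ ≠ 0 := by linarith
    field_simp; ring
  have g0 : 0 ≤ (c - kp θ) / (1 - kp θ) := div_nonneg (by linarith) (by linarith)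
  have g1 : (c - kp θ) / (1 - kp θ) ≤ 1 := by rw [div_le_one (by linarith)]; linarith
  refine ⟨θ, (c - kp θ) / (1 - kp θ), t0, t3, g0, g1, ?_, ?_, ?_⟩
  · rw [Q_eq t0 t3 g0 g1, hcc, ← eu', ← ev']
  · intro h4
    rw [hnb, ← kn] at h4
    have := mul_right_cancel₀ (show nb θ ≠ 0 by linarith) h4
    rw [this]; simp
  · intro h4
    have h5 : c = 1 := by linarith
    refine ⟨t2 (by rw [h4, h5]; norm_num), ?_⟩
    rw [h5]
    exact div_self (by linarith)

lemma Q_surj (z : X) : ∃ θ l, 0 ≤ θ ∧ θ ≤ 3 ∧ 0 ≤ l ∧ l ≤ 1 ∧ Q θ l = z ∧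
    (z ∈ C1 → 2 ≤ θ ∧ l = 1) := by
  obtain ⟨x, y, x0, x1, hok, hz, -⟩ := pt_surj z
  have hyy := abs_le.1 hok.1
  -- move into the triangle
  have key : ∃ u v, mu u v ≤ 1 ∧ Φ (1/2 + u) v = Φ x y ∧ |u| ≤ 1 ∧ |v| = |y| ∧ (|y| = 1 → v = -1) := by
    by_cases ht : mu (x - 1/2) y ≤ 1 ∧ y ≠ 1
    · refine ⟨x - 1/2, y, ht.1, by congr 1; ring, ?_, rfl, ?_⟩
      · rw [abs_le]; constructor <;> linarith
      · intro h
        rcases eq_or_eq_neg_of_abs_eq h with h | h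
        · exact absurd h ht.2
        · exact h
    · have hy : 1 ≤ y + 2 * |x - 1/2| := by
        rw [not_and_or] at ht
        rcases ht with ht | ht
        · unfold mu at ht
          rw [not_le, lt_max_iff] at ht
          rcases ht with ht | ht <;> linarith
        · rw [not_not] at ht; rw [ht]; linarith [abs_nonneg (x - 1/2)]
      have hone : |y| = 1 → -y = -1 := by
        intro h
        rcases eq_or_eq_neg_of_abs_eq h with h | h
        · rw [h]
        · exfalso
          have : |x - 1/2| ≤ 1/2 := by rw [abs_le]; constructor <;> linarith
          linarith
      rcases le_total (x - 1/2) 0 with hx | hx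
      · rw [abs_of_nonpos hx] at hy
        refine ⟨x - 1/2 + 1, -y, ?_, ?_, ?_, abs_neg y, hone⟩
        · unfold mu
          rw [abs_of_nonneg (by linarith)]
          apply max_le <;> linarith
        · have := Φ_shift x (-y) 1
          norm_num at this
          rw [← this]; congr 1; ring
        · rw [abs_le]; constructor <;> linarith
      · rw [abs_of_nonneg hx] at hy
        refine ⟨x - 1/2 - 1, -y, ?_, ?_, ?_, abs_neg y, hone⟩
        · unfold mu
          rw [abs_of_nonpos (by linarith)]
          apply max_le <;> linarith
        · have := Φ_shift x (-y) (-1)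
          norm_num at this
          rw [← this]; congr 1; ring
        · rw [abs_le]; constructor <;> linarith
  obtain ⟨u, v, hmu, hΦ, hu, hv, hone⟩ := key
  have hnn : 1/4 ≤ max |u| |v| := by
    by_contra hc
    rw [not_le, max_lt_iff] at hc
    apply hok.2
    refine ⟨hv ▸ hc.2, ?_⟩
    rw [← re_Φ x y, ← hΦ, re_Φ, cos_neg_iff]
    · rw [show (1/2 + u - 1/2 : ℝ) = u by ring]; exact hc.1
    · linarith [(abs_lt.1 hc.1).1]
    · linarith [(abs_lt.1 hc.1).2]
  obtain ⟨θ, l, t0, t3, l0, l1, hQ, -, h2⟩ := tri_surj hmu hnn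
  refine ⟨θ, l, t0, t3, l0, l1, ?_, ?_⟩
  · rw [hQ, hz]; unfold pt; rw [hΦ]
  · intro hC
    rw [mem_C1, hz, η_pt hok] at hC
    exact h2 (hone hC)

lemma C2_param {z : X} (hz : z ∈ C2) : ∃ θ, 0 ≤ θ ∧ θ ≤ 3 ∧ Q θ 0 = z := by
  obtain ⟨x, y, hok, hz, hm⟩ := C2_spec hz
  have h1 := (le_max_left _ _).trans hm.le
  have h2 := abs_le.1 ((le_max_right _ _).trans hm.le)
  have hmu : mu (x - 1/2) y ≤ 1 := by unfold mu; apply max_le <;> linarith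
  obtain ⟨θ, l, t0, t3, l0, l1, hQ, h3, -⟩ := tri_surj hmu hm.ge
  refine ⟨θ, t0, t3, ?_⟩
  rw [h3 hm] at hQ
  rw [hQ, hz, show (1/2 + (x - 1/2) : ℝ) = x by ring]

lemma Q_C2 {θ : ℝ} (h0 : 0 ≤ θ) (h3 : θ ≤ 3) : Q θ 0 ∈ C2 := by
  have hok := Q_ok' h0 h3 le_rfl zero_le_one
  rw [Q_eq h0 h3 le_rfl zero_le_one]
  apply pt_mem_C2 hok
  rw [cc_zero, add_sub_cancel_left, abs_mul, abs_mul, abs_of_pos (kp_pos h0 h3),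
    ← mul_max_of_nonneg _ _ (kp_pos h0 h3).le]
  exact kp_nb h0 h3

lemma Q_C1 {θ : ℝ} (h2 : 2 ≤ θ) (h3 : θ ≤ 3) : Q θ 1 ∈ C1 := by
  have hok := Q_ok' (by linarith) h3 zero_le_one le_rfl
  rw [Q_eq (by linarith) h3 zero_le_one le_rfl, mem_C1, η_pt hok, cc_one]
  rcases b_cases (by linarith) h3 with ⟨h, _, e⟩ | ⟨h, h', _, e⟩ | ⟨h, _, e⟩
  · linarith
  · have : θ = 2 := by linarith
    rw [e, this]; norm_num
  · rw [e]; norm_num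

attribute [local irreducible] Q

/-- Maps descend along polar coordinates. -/
lemma descent {Z Y : Type*} [TopologicalSpace Z] [TopologicalSpace Y] (Ψ : ℝ → ℝ → Z → Y)
    (hc : Continuous fun p : (ℝ × ℝ) × Z => Ψ p.1.1 p.1.2 p.2)
    (ha : ∀ l z, 0 ≤ l → l ≤ 1 → Ψ 0 l z = Ψ 3 l z)
    (hb : ∀ s z, 0 ≤ s → s ≤ 1 → Ψ s 1 z = Ψ (s + 1) 1 z) :
    ∃ F : X → Z → Y, Continuous (fun p : X × Z => F p.1 p.2) ∧
      ∀ θ l z, 0 ≤ θ → θ ≤ 3 → 0 ≤ l → l ≤ 1 → F (Q θ l) z = Ψ θ l z := by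
  choose θf lf t0 t3 l0 l1 hQ hnot using Q_surj
  clear hnot
  have hF : ∀ θ l z, 0 ≤ θ → θ ≤ 3 → 0 ≤ l → l ≤ 1 →
      Ψ (θf (Q θ l)) (lf (Q θ l)) z = Ψ θ l z := by
    intro θ l z a b c d
    exact Q_ker (t0 _) (t3 _) (l0 _) (l1 _) a b c d (hQ _) (F := fun θ l => Ψ θ l z)
      (fun l a b => ha l z a b) (fun s a b => hb s z a b)
  refine ⟨fun x z => Ψ (θf x) (lf x) z, ?_, hF⟩
  let q0 : (Icc (0:ℝ) 3) × (Icc (0:ℝ) 1) → X := fun p => Q p.1 p.2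
  have hq0 : Continuous q0 := continuous_Q.comp (f := fun p : (Icc (0:ℝ) 3) × (Icc (0:ℝ) 1) =>
    ((p.1 : ℝ), (p.2 : ℝ))) (by fun_prop)
  have hp : IsProperMap (Prod.map q0 (id : Z → Z)) := by
    apply IsProperMap.prodMap
    · exact hq0.isProperMap
    · exact isProperMap_id
  have hs : Function.Surjective (Prod.map q0 (id : Z → Z)) := by
    rintro ⟨x, z⟩
    exact ⟨((⟨θf x, t0 x, t3 x⟩, ⟨lf x, l0 x, l1 x⟩), z), by simp [q0, hQ]⟩
  have hqm := hp.isClosedMap.isQuotientMap hp.continuous hs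
  rw [hqm.continuous_iff]
  have : ((fun p : X × Z => Ψ (θf p.1) (lf p.1) p.2) ∘ Prod.map q0 id) =
      fun p : ((Icc (0:ℝ) 3) × (Icc (0:ℝ) 1)) × Z => Ψ p.1.1 p.1.2 p.2 := by
    funext p
    exact hF _ _ _ p.1.1.2.1 p.1.1.2.2 p.1.2.2.1 p.1.2.2.2
  rw [this]
  exact hc.comp (f := fun p : ((Icc (0:ℝ) 3) × (Icc (0:ℝ) 1)) × Z =>
    (((p.1.1 : ℝ), (p.1.2 : ℝ)), p.2)) (by fun_prop)

/-- The deformation to the outer graph. -/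
lemma exists_D : ∃ D : X → ℝ → X, Continuous (fun p : X × ℝ => D p.1 p.2) ∧
    ∀ θ l t, 0 ≤ θ → θ ≤ 3 → 0 ≤ l → l ≤ 1 → D (Q θ l) t = Q θ (l + t * (1 - l)) := by
  apply descent (fun θ l t => Q θ (l + t * (1 - l)))
  · exact continuous_Q.comp (f := fun p : (ℝ × ℝ) × ℝ => (p.1.1, p.1.2 + p.2 * (1 - p.1.2)))
      (by fun_prop)
  · intro l t _ _; exact Q_zero_three _
  · intro s t h0 h1
    norm_num
    exact Q_side h0 h1

end PMB
end

section
namespace PMB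

attribute [local irreducible] Q

/-- A point on the edge of type `a` at the identity. -/
noncomputable def te (a : Bool) (s : ℝ) : T := ⟨ee 1 a (cl s), ee_mem (cl_mem s)⟩

lemma continuous_te (a : Bool) : Continuous (te a) :=
  Continuous.subtype_mk ((continuous_ee 1 a).comp continuous_cl) _

lemma continuous_tmk : Continuous tmk := tmk_covering.continuous

/-- The common vertex of the quotient graph. -/
noncomputable def v0 : TG := tmk ⟨V 1, V_mem 1⟩

lemma tmk_V {v : T} {h : G} (hv : v.1 = V h) : tmk v = v0 := by
  unfold v0
  rw [tmk_eq]
  refine ⟨h, ?_⟩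
  apply Subtype.ext
  change act h (V 1) = v.1
  rw [act_V, mul_one, hv]

lemma tmk_te_zero (a : Bool) {s : ℝ} (hs : s ≤ 0) : tmk (te a s) = v0 := by
  apply tmk_V (h := 1)
  change ee 1 a (cl s) = _
  rw [cl_of_le hs, ee_zero]

lemma tmk_te_one (a : Bool) {s : ℝ} (hs : 1 ≤ s) : tmk (te a s) = v0 := by
  apply tmk_V (h := 1 * FreeGroup.of a)
  change ee 1 a (cl s) = _
  rw [cl_of_ge hs, ee_one]

/-- The retraction in the angular coordinate. -/
noncomputable def r0 (θ : ℝ) : TG :=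
  if θ ≤ 1 then tmk (te false θ) else
    if θ ≤ 2 then tmk (te false (θ - 1)) else tmk (te true (θ - 2))

lemma continuous_r0 : Continuous r0 := by
  unfold r0
  have h1 : Continuous fun θ : ℝ => tmk (te false θ) := continuous_tmk.comp (continuous_te _)
  have h2 : Continuous fun θ : ℝ => tmk (te false (θ - 1)) :=
    h1.comp (continuous_id.sub continuous_const)
  have h3 : Continuous fun θ : ℝ => tmk (te true (θ - 2)) :=
    (continuous_tmk.comp (continuous_te _)).comp (continuous_id.sub continuous_const)
  refine Continuous.if_le h1 (Continuous.if_le h2 h3 continuous_id continuous_const ?_)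
    continuous_id continuous_const ?_
  · intro θ h
    rw [tmk_te_one _ (by linarith), tmk_te_zero _ (by linarith)]
  · intro θ h
    rw [if_pos (by linarith), tmk_te_one _ (by linarith), tmk_te_zero _ (by linarith)]

lemma r0_first {s : ℝ} (h1 : s ≤ 1) : r0 s = tmk (te false s) := by
  unfold r0; rw [if_pos h1]

lemma r0_second {s : ℝ} (h0 : 1 ≤ s) (h1 : s ≤ 2) : r0 s = tmk (te false (s - 1)) := by
  rcases h0.eq_or_lt with h | h
  · rw [r0_first h.ge, tmk_te_one _ h0, tmk_te_zero _ (by linarith)]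
  · unfold r0; rw [if_neg (by linarith), if_pos h1]

lemma r0_third {s : ℝ} (h0 : 2 ≤ s) : r0 s = tmk (te true (s - 2)) := by
  rcases h0.eq_or_lt with h | h
  · rw [r0_second (by linarith) h.ge, tmk_te_one _ (by linarith), tmk_te_zero _ (by linarith)]
  · unfold r0; rw [if_neg (by linarith), if_neg (by linarith)]

lemma exists_r : ∃ r : X → TG, Continuous r ∧
    ∀ θ l, 0 ≤ θ → θ ≤ 3 → 0 ≤ l → l ≤ 1 → r (Q θ l) = r0 θ := by
  obtain ⟨F, hF, h⟩ := descent (Z := Unit) (fun θ _ _ => r0 θ)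
    (continuous_r0.comp (f := fun p : (ℝ × ℝ) × Unit => p.1.1) (by fun_prop))
    (by
      intro l z _ _
      rw [r0_first zero_le_one, r0_third (by norm_num), tmk_te_zero _ le_rfl,
        tmk_te_one _ (by norm_num)])
    (by
      intro s z h0 h1
      rw [r0_first h1, r0_second (by linarith) (by linarith)]
      simp)
  exact ⟨fun x => F x (), hF.comp (f := fun x : X => (x, ())) (by fun_prop),
    fun θ l a b c d => h θ l () a b c d⟩

/-- Edge parametrisation in `X`. -/
noncomputable def jp (a : Bool) (s : ℝ) : X := if a then Q (2 + s) 1 else Q s 1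

lemma jp_vertex (a : Bool) {s : ℝ} (hs : s = 0 ∨ s = 1) : jp a s = Q 0 1 := by
  have h1 : Q 0 1 = Q 1 1 := by
    have := Q_side le_rfl (zero_le_one (α := ℝ)); rwa [zero_add] at this
  have h2 : Q 1 1 = Q 2 1 := by
    have := Q_side (zero_le_one (α := ℝ)) le_rfl; norm_num at this; exact this
  have h3 := Q_zero_three 1
  unfold jp
  cases a <;> rcases hs with rfl | rfl
  · simp
  · simp [h1]
  · simp [h1, h2]
  · norm_num; exact h3.symm

lemma continuous_jp (a : Bool) : Continuous (jp a) := by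
  unfold jp
  cases a
  · exact continuous_Q.comp (f := fun s : ℝ => (s, (1:ℝ))) (by fun_prop)
  · exact continuous_Q.comp (f := fun s : ℝ => (2 + s, (1:ℝ))) (by fun_prop)

lemma exists_j : ∃ j : T → X, Continuous j ∧
    ∀ (v : T) g a s, s ∈ Icc (0:ℝ) 1 → v.1 = ee g a s → j v = jp a s := by
  choose g a s hs e using fun v : T => v.2
  have key : ∀ (v : T) g' a' s', s' ∈ Icc (0:ℝ) 1 → v.1 = ee g' a' s' →
      jp (a v) (s v) = jp a' s' := by
    intro v g' a' s' hs' e'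
    rcases ee_ker ((e v).symm.trans e') with ⟨_, h1, h2⟩ | ⟨h1, h2⟩
    · rw [h1, h2]
    · rw [jp_vertex _ h1, jp_vertex _ h2]
  refine ⟨fun v => jp (a v) (s v), ?_, key⟩
  apply locallyFinite_Edge.continuous iUnion_Edge isClosed_Edge
  intro ε
  apply ContinuousOn.congr (f := fun v : T => jp ε.2 (v.1 ε))
  · exact ((continuous_jp ε.2).comp (continuous_ev ε)).continuousOn
  · rintro v ⟨s', hs', e'⟩
    have : v.1 ε = s' := by rw [e']; exact ee_same _ _ _
    dsimp only
    rw [key v _ _ _ hs' e', this]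

lemma orbit_te {v : T} {a : Bool} {s : ℝ} (h : tmk v = tmk (te a s)) :
    ∃ k, v.1 = ee k a (cl s) := by
  rw [tmk_eq] at h
  obtain ⟨k, hk⟩ := h
  refine ⟨k, ?_⟩
  rw [← hk]
  change act k (ee 1 a (cl s)) = _
  rw [act_ee, mul_one]

lemma line_stab {v : Ed → ℝ} {k : G} (h1 : v ∈ Line) (h2 : act k v ∈ Line) :
    k ∈ Subgroup.zpowers gx := by
  obtain ⟨g, hg, s, hs, rfl⟩ := h1
  obtain ⟨g', hg', s', hs', e⟩ := h2
  rw [act_ee] at e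
  have hx : gx ∈ Subgroup.zpowers gx := Subgroup.mem_zpowers _
  suffices k * g ∈ Subgroup.zpowers gx by
    have := mul_mem this (inv_mem hg); simpa using this
  have hV : ∀ {p p' : G} {t t' : ℝ}, (t = 0 ∨ t = 1) → (t' = 0 ∨ t' = 1) →
      p' ∈ Subgroup.zpowers gx → ee p true t = ee p' true t' → p ∈ Subgroup.zpowers gx := by
    intro p p' t t' ht ht' hp' e
    rcases ee_vertex p true t ht with ⟨a, _⟩ | ⟨a, _⟩ <;>
      rcases ee_vertex p' true t' ht' with ⟨a', _⟩ | ⟨a', _⟩ <;>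
      have b := V_inj (a.symm.trans (e.trans a'))
    · rw [b]; exact hp'
    · rw [b]; exact mul_mem hp' hx
    · have : p = p' * gx⁻¹ := by rw [← b]; simp
      rw [this]; exact mul_mem hp' (inv_mem hx)
    · have : p = p' := mul_right_cancel b
      rw [this]; exact hp'
  rcases ee_ker e with ⟨h, _, _⟩ | ⟨h, h'⟩
  · rw [h]; exact hg'
  · exact hV h h' hg' e

end PMB
end

section
namespace PMB

attribute [local irreducible] Q

lemma central_two (f1 : X → X) (hf : Continuous f1) (h2 : ∀ z ∈ C2, f1 z ∈ C1)
    (b : X) (hb : ∀ z ∈ C1, f1 z = b) (D : X → ℝ → X)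
    (hD : ∀ θ l t, 0 ≤ θ → θ ≤ 3 → 0 ≤ l → l ≤ 1 → D (Q θ l) t = Q θ (l + t * (1 - l))) :
    ∃ H : X → ℝ → X, Continuous (fun p : X × ℝ => H p.1 p.2) ∧ (∀ z, H z 0 = D (f1 z) 1) ∧
      (∀ z, H z 1 ∈ C1) ∧ (∀ t, ∀ z ∈ C2, H z t ∈ C1) ∧
      (∀ t, ∀ z ∈ C1, ∀ z' ∈ C1, H z t = H z' t) := by
  obtain ⟨r, hrc, hr⟩ := exists_r
  obtain ⟨j, hjc, hj⟩ := exists_j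
  have cov : IsCoveringMap tmk := tmk_covering.isCoveringMap
  have hrx : ∀ z ∈ C1, ∃ s ∈ Icc (0:ℝ) 1, r z = tmk (te true s) := by
    intro z hz
    obtain ⟨θ, l, t0, t3, l0, l1, e, h⟩ := Q_surj z
    refine ⟨θ - 2, ⟨by linarith [(h hz).1], by linarith⟩, ?_⟩
    rw [← e, hr θ l t0 t3 l0 l1, r0_third (h hz).1]
  -- the map to lift
  let φ : C(ℝ × ℝ, TG) := ⟨fun p => r (f1 (Q p.1 p.2)), hrc.comp (hf.comp continuous_Q)⟩
  obtain ⟨s0, hs0, e0⟩ := hrx _ (h2 _ (Q_C2 le_rfl (by norm_num)))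
  obtain ⟨F, ⟨hF0, hFl⟩, -⟩ := cov.existsUnique_continuousMap_lifts φ (0, 0) (te true s0) e0.symm
  have hl : ∀ θ l, tmk (F (θ, l)) = r (f1 (Q θ l)) := fun θ l => congrFun hFl (θ, l)
  have hF0' : (F (0, 0)).1 ∈ Line := by
    rw [hF0]
    exact ⟨1, one_mem _, cl s0, cl_mem s0, rfl⟩
  -- inner circle
  have hin : ∀ θ, 0 ≤ θ → θ ≤ 3 → (F (θ, 0)).1 ∈ Line := by
    intro θ t0 t3
    have hK : IsPreconnected ((fun θ : ℝ => F (θ, 0)) '' Icc 0 3) :=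
      isPreconnected_Icc.image _ (by fun_prop)
    refine line_connected hK (v := F (0, 0)) ⟨0, by norm_num, rfl⟩ hF0' ?_ _ ⟨θ, ⟨t0, t3⟩, rfl⟩
    rintro w ⟨θ, ⟨t0, t3⟩, rfl⟩
    obtain ⟨s, hs, e⟩ := hrx _ (h2 _ (Q_C2 t0 t3))
    obtain ⟨k, hk⟩ := orbit_te ((hl θ 0).trans e)
    exact ⟨k, _, cl_mem s, hk⟩
  -- sides
  have hside0 : tmk (F (1, 1)) = tmk (F (0, 1)) := by
    rw [hl, hl]
    have := Q_side le_rfl (zero_le_one (α := ℝ)); rw [zero_add] at this; rw [this]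
  rw [tmk_eq] at hside0
  obtain ⟨g, hg⟩ := hside0
  have hg' : F (1, 1) = g • F (0, 1) := hg.symm
  have tsm : ∀ (k : G) (v : T), tmk (k • v) = tmk v := fun k v => tmk_eq.2 ⟨k, rfl⟩
  have hside : ∀ s, 0 ≤ s → s ≤ 1 → F (s + 1, 1) = g • F (s, 1) := by
    intro s h0 h1
    have := cov.eqOn_of_comp_eqOn (s := Icc (0:ℝ) 1) (g₁ := fun s => F (s + 1, 1))
      (g₂ := fun s => g • F (s, 1)) isPreconnected_Icc (by fun_prop)
      (Continuous.continuousOn (Continuous.const_smul (by fun_prop) g))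
      (fun s hs => by
        change tmk (F (s + 1, 1)) = tmk (g • F (s, 1))
        rw [tsm, hl, hl, Q_side hs.1 hs.2])
      (a := 0) (by norm_num) (by simpa using hg')
    exact this ⟨h0, h1⟩
  -- outer circle
  have hout : ∀ θ θ', 2 ≤ θ → θ ≤ 3 → 2 ≤ θ' → θ' ≤ 3 → F (θ, 1) = F (θ', 1) := by
    intro θ θ' a1 a2 b1 b2
    refine cov.constOn_of_comp (s := Icc (2:ℝ) 3) (g := fun s => F (s, 1)) isPreconnected_Icc
      (by fun_prop) ?_ ⟨a1, a2⟩ ⟨b1, b2⟩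
    intro x hx y hy
    rw [hl, hl, hb _ (Q_C1 hx.1 hx.2), hb _ (Q_C1 hy.1 hy.2)]
  have h31 : F (3, 1) = g ^ 2 • F (0, 1) := by
    rw [hout 3 2 (by norm_num) le_rfl le_rfl (by norm_num)]
    have := hside 1 zero_le_one le_rfl
    norm_num at this
    rw [this, hg', pow_two, mul_smul]
  have hrad : ∀ l, 0 ≤ l → l ≤ 1 → F (3, l) = g ^ 2 • F (0, l) := by
    intro l h0 h1
    have := cov.eqOn_of_comp_eqOn (s := Icc (0:ℝ) 1) (g₁ := fun l => F (3, l))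
      (g₂ := fun l => g ^ 2 • F (0, l)) isPreconnected_Icc (by fun_prop)
      (Continuous.continuousOn (Continuous.const_smul (g := fun l : ℝ => F (0, l))
        (by fun_prop) (g ^ 2)))
      (fun s hs => by
        change tmk (F (3, s)) = tmk (g ^ 2 • F (0, s))
        rw [tsm, hl, hl, Q_zero_three])
      (a := 1) (by norm_num) h31
    exact this ⟨h0, h1⟩
  have hgx : g ∈ Subgroup.zpowers gx := by
    apply sqrt_mem
    have h3 := hin 3 (by norm_num) le_rfl
    rw [hrad 0 le_rfl zero_le_one, smul_val] at h3
    exact line_stab hF0' h3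
  -- the contraction onto the line
  obtain ⟨τ, hτ, hcap⟩ := cap_compact (K := F '' (Icc 0 3 ×ˢ Icc 0 1))
    ((isCompact_Icc.prod isCompact_Icc).image F.continuous)
  have hpos : ∀ t, 0 ≤ τ * (1 - cl t) := fun t => mul_nonneg hτ (by linarith [(cl_mem t).2])
  let C : ℝ → T → T := fun t v => ⟨cap (τ * (1 - cl t)) v.1, cap_mem (hpos t) v.2⟩
  have hCc : Continuous fun p : ℝ × T => C p.1 p.2 := by
    apply Continuous.subtype_mk
    have hcl := continuous_cl
    exact continuous_cap.comp (f := fun p : ℝ × T => (τ * (1 - cl p.1), p.2.1)) (by fun_prop)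
  have hCs : ∀ k ∈ Subgroup.zpowers gx, ∀ t v, C t (k • v) = k • C t v := by
    intro k hk t v
    apply Subtype.ext
    change cap _ (act k v.1) = act k (cap _ v.1)
    exact cap_act hk _ _
  have hjs : ∀ (k : G) v, j (k • v) = j v := by
    intro k v
    obtain ⟨p, a, s, hs, e⟩ := v.2
    rw [hj v p a s hs e]
    apply hj _ (k * p) a s hs
    rw [smul_val, e, act_ee]
  have hjL : ∀ v : T, v.1 ∈ Line → j v ∈ C1 := by
    rintro v ⟨p, -, s, hs, e⟩
    rw [hj v p true s hs e]
    simp only [jp, if_true]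
    exact Q_C1 (by linarith [hs.1]) (by linarith [hs.2])
  have hjr : ∀ (v : T) θ, 0 ≤ θ → θ ≤ 3 → tmk v = r0 θ → j v = Q θ 1 := by
    intro v θ t0 t3 e
    rcases le_total θ 1 with h | h
    · rw [r0_first h] at e
      obtain ⟨k, hk⟩ := orbit_te e
      rw [hj v _ _ _ (cl_mem _) hk, cl_of_mem ⟨t0, h⟩]
      simp [jp]
    · rcases le_total θ 2 with h' | h'
      · rw [r0_second h h'] at e
        obtain ⟨k, hk⟩ := orbit_te e
        rw [hj v _ _ _ (cl_mem _) hk, cl_of_mem ⟨by linarith, by linarith⟩]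
        have := Q_side (s := θ - 1) (by linarith) (by linarith)
        simpa [jp] using this
      · rw [r0_third h'] at e
        obtain ⟨k, hk⟩ := orbit_te e
        rw [hj v _ _ _ (cl_mem _) hk, cl_of_mem ⟨by linarith, by linarith⟩]
        simp [jp]
  obtain ⟨H, hH, hHQ⟩ := descent (Z := ℝ) (fun θ l t => j (C t (F (θ, l))))
    (hjc.comp (hCc.comp (f := fun p : (ℝ × ℝ) × ℝ => (p.2, F (p.1.1, p.1.2))) (by fun_prop)))
    (by
      intro l t h0 h1
      rw [hrad l h0 h1, hCs _ (pow_mem hgx 2), hjs])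
    (by
      intro s t h0 h1
      rw [hside s h0 h1, hCs _ hgx, hjs])
  refine ⟨H, hH, ?_, ?_, ?_, ?_⟩
  · intro z
    obtain ⟨θ, l, t0, t3, l0, l1, rfl, -⟩ := Q_surj z
    rw [hHQ θ l 0 t0 t3 l0 l1]
    have h1 : C 0 (F (θ, l)) = F (θ, l) := by
      apply Subtype.ext
      change cap (τ * (1 - cl 0)) _ = _
      rw [cl_of_le le_rfl, sub_zero, mul_one]
      exact hcap _ ⟨(θ, l), ⟨⟨t0, t3⟩, ⟨l0, l1⟩⟩, rfl⟩
    rw [h1]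
    have h5 := hl θ l
    obtain ⟨θ', l', t0', t3', l0', l1', e, -⟩ := Q_surj (f1 (Q θ l))
    rw [← e, hr _ _ t0' t3' l0' l1'] at h5
    rw [hjr _ _ t0' t3' h5, ← e, hD _ _ _ t0' t3' l0' l1']
    congr 1; ring
  · intro z
    obtain ⟨θ, l, t0, t3, l0, l1, rfl, -⟩ := Q_surj z
    rw [hHQ θ l 1 t0 t3 l0 l1]
    apply hjL
    change cap (τ * (1 - cl 1)) _ ∈ _
    rw [cl_of_ge le_rfl, sub_self, mul_zero]
    exact cap_zero (F (θ, l)).2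
  · intro t z hz
    obtain ⟨θ, t0, t3, rfl⟩ := C2_param hz
    rw [hHQ θ 0 t t0 t3 le_rfl zero_le_one]
    apply hjL
    change cap _ _ ∈ _
    rw [cap_line (hpos t) (hin θ t0 t3)]
    exact hin θ t0 t3
  · intro t z hz z' hz'
    obtain ⟨θ, l, t0, t3, l0, l1, rfl, h⟩ := Q_surj z
    obtain ⟨θ', l', t0', t3', l0', l1', rfl, h'⟩ := Q_surj z'
    rw [hHQ θ l t t0 t3 l0 l1, hHQ θ' l' t t0' t3' l0' l1', (h hz).2, (h' hz').2,
      hout θ θ' (h hz).1 t3 (h' hz').1 t3']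

lemma central (f1 : X → X) (hf : Continuous f1) (h2 : ∀ z ∈ C2, f1 z ∈ C1)
    (b : X) (hb : ∀ z ∈ C1, f1 z = b) :
    ∃ H : X → ℝ → X, Continuous (fun p : X × ℝ => H p.1 p.2) ∧ (∀ z, H z 0 = f1 z) ∧
      (∀ z, H z 1 ∈ C1) ∧ (∀ t, ∀ z ∈ C2, H z t ∈ C1) ∧
      (∀ t, ∀ z ∈ C1, ∀ z' ∈ C1, H z t = H z' t) := by
  obtain ⟨D, hDc, hD⟩ := exists_D
  obtain ⟨H, hH, H0, H1, HC2, HC1⟩ := central_two f1 hf h2 b hb D hD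
  have hD0 : ∀ z, D z 0 = z := by
    intro z
    obtain ⟨θ, l, t0, t3, l0, l1, rfl, -⟩ := Q_surj z
    rw [hD _ _ _ t0 t3 l0 l1]; congr 1; ring
  have hDC : ∀ z ∈ C1, ∀ t, D z t = z := by
    intro z hz t
    obtain ⟨θ, l, t0, t3, l0, l1, rfl, h⟩ := Q_surj z
    rw [hD _ _ _ t0 t3 l0 l1, (h hz).2]; congr 1; ring
  refine ⟨fun z t => if t ≤ 1/2 then D (f1 z) (2 * t) else H z (2 * t - 1), ?_, ?_, ?_, ?_, ?_⟩
  · apply Continuous.if_le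
    · exact hDc.comp (f := fun p : X × ℝ => (f1 p.1, 2 * p.2)) (by fun_prop)
    · exact hH.comp (f := fun p : X × ℝ => (p.1, 2 * p.2 - 1)) (by fun_prop)
    · fun_prop
    · fun_prop
    · intro p hp
      rw [hp]; norm_num
      rw [H0]
  · intro z
    norm_num
    exact hD0 _
  · intro z
    norm_num
    exact H1 z
  · intro t z hz
    dsimp only
    split_ifs
    · rw [hDC _ (h2 z hz)]; exact h2 z hz
    · exact HC2 _ z hz
  · intro t z hz z' hz'
    dsimp only
    rw [hb z hz, hb z' hz', HC1 _ z hz z' hz']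

end PMB
end

section
namespace PMB

lemma bh_of (f g : C(X, X)) (H : X → ℝ → X) (hc : Continuous fun p : X × ℝ => H p.1 p.2)
    (h0 : ∀ z, H z 0 = f z) (h1 : ∀ z, H z 1 = g z)
    (hB : ∀ z ∈ Bd, ∀ t, 0 ≤ t → t ≤ 1 → H z t ∈ Bd) : BoundaryHomotopic f g := by
  refine ⟨⟨⟨fun p => H p.2 p.1, ?_⟩, ?_, ?_⟩, ?_⟩
  · exact hc.comp (f := fun p : unitInterval × X => (p.2, (p.1 : ℝ))) (by fun_prop)
  · intro z; exact h0 z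
  · intro z; exact h1 z
  · intro z hz t
    exact hB z hz t t.2.1 t.2.2

lemma bh_trans {f g h : C(X, X)} (h1 : BoundaryHomotopic f g) (h2 : BoundaryHomotopic g h) :
    BoundaryHomotopic f h := by
  obtain ⟨H1, b1⟩ := h1
  obtain ⟨H2, b2⟩ := h2
  refine ⟨H1.trans H2, ?_⟩
  intro z hz t
  rw [ContinuousMap.Homotopy.trans_apply]
  split_ifs
  · exact b1 z hz _
  · exact b2 z hz _

lemma Zm_C1 {t : ℝ} (ht : 0 ≤ t) {z : X} (hz : z ∈ C1) : Zm t z ∈ C1 := by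
  rw [mem_C1] at hz ⊢
  rw [η_Zm (by linarith), hz, max_eq_left (by linarith), min_eq_left (by linarith)]

lemma Zm_C2 {t : ℝ} {z : X} (hz : z ∈ C2) : Zm t z = z := Zm_small (η_C2 hz)

lemma S_C1 {z : X} (hz : 3/4 ≤ η z) : Zm (1/2) z ∈ C1 := by
  rw [mem_C1, η_Zm (by linarith), max_eq_left (by norm_num), min_eq_left (by linarith)]

lemma continuous_Zm' (t : ℝ) : Continuous (Zm t) :=
  continuous_Zm.comp (f := fun z : X => (t, z)) (by fun_prop)

/-- Precomposition with the collar push. -/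
lemma step_A (f f' : C(X, X)) (hf : BoundaryPreserving f) (h : ∀ z, f' z = f (Zm (1/2) z)) :
    BoundaryHomotopic f f' := by
  apply bh_of f f' (fun z t => f (Zm (t / 2) z))
  · exact f.continuous.comp (continuous_Zm.comp (f := fun p : X × ℝ => (p.2 / 2, p.1))
      (by fun_prop))
  · intro z; simp [Zm_zero]
  · intro z; exact (h z).symm
  · intro z hz t t0 t1
    apply hf
    rcases hz with hz | hz
    · exact Or.inl (Zm_C1 (by linarith) hz)
    · rw [Zm_C2 hz]; exact Or.inr hz

/-- Gluing along `η = 3/4`. -/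
lemma glue (u v : X × ℝ → X) (hu : Continuous u)
    (hv : ContinuousOn v {p | 3/4 ≤ η p.1}) (he : ∀ p : X × ℝ, η p.1 ≤ 3/4 → v p = u p) :
    Continuous v := by
  have hη : Continuous fun p : X × ℝ => η p.1 := continuous_η.comp continuous_fst
  have h1 : ContinuousOn v {p | η p.1 ≤ 3/4} := hu.continuousOn.congr he
  have h2 := h1.union_of_isClosed hv (isClosed_le hη continuous_const)
    (isClosed_le continuous_const hη)
  have h3 : {p : X × ℝ | η p.1 ≤ 3/4} ∪ {p | 3/4 ≤ η p.1} = univ := by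
    ext p
    simp only [mem_union, mem_univ, iff_true]
    exact le_total (η p.1) (3/4)
  rw [h3] at h2
  exact continuousOn_univ.1 h2

/-- Deform `f` to a map constant on `C1`. -/
lemma step_B (f : C(X, X)) (hf : BoundaryPreserving f)
    (h21 : MapsTo f C2 C1) (h12 : MapsTo f C1 C2) (h' : MapsTo f C1 Bd)
    (h1 : Inessential (restrictMap f h')) :
    ∃ f1 : C(X, X), BoundaryHomotopic f f1 ∧ (∀ z ∈ C2, f1 z ∈ C1) ∧
      ∃ b ∈ C2, ∀ z ∈ C1, f1 z = b := by
  obtain ⟨b, ⟨K⟩⟩ := h1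
  have K0 : ∀ c : C1, ((K (0, c) : Bd) : X) = f c := fun c => by
    rw [K.apply_zero]; rfl
  have K1 : ∀ c : C1, K (1, c) = b := fun c => by rw [K.apply_one]; rfl
  -- a point of C1
  let c0 : C1 := ⟨Q 2 1, Q_C1 le_rfl (by norm_num)⟩
  have hbC2 : (b : X) ∈ C2 := by
    rcases b.2 with hb | hb
    · exfalso
      have hcont : Continuous fun s : unitInterval => η (K (s, c0) : X) :=
        continuous_η.comp (continuous_subtype_val.comp
          (K.continuous.comp (f := fun s : unitInterval => (s, c0)) (by fun_prop)))
      obtain ⟨s, hs⟩ := mem_range_of_exists_le_of_exists_ge (c := 1/2) hcont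
        ⟨0, by
          rw [K0]
          have := η_C2 (h12 c0.2)
          linarith⟩
        ⟨1, by
          rw [K1, (mem_C1 _).1 hb]; norm_num⟩
      dsimp only at hs
      rcases (K (s, c0)).2 with h | h
      · rw [(mem_C1 _).1 h] at hs; norm_num at hs
      · have := η_C2 h; rw [hs] at this; norm_num at this
    · exact hb
  classical
  let B : X × ℝ → X := fun p => if h : 3/4 ≤ η p.1 then
      (K (projIcc 0 1 zero_le_one (p.2 * (4 * η p.1 - 3)), ⟨Zm (1/2) p.1, S_C1 h⟩) : X)
    else f (Zm (1/2) p.1)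
  have hBpos : ∀ p : X × ℝ, ∀ h : 3/4 ≤ η p.1, B p =
      (K (projIcc 0 1 zero_le_one (p.2 * (4 * η p.1 - 3)), ⟨Zm (1/2) p.1, S_C1 h⟩) : X) :=
    fun p h => dif_pos h
  have hBsmall : ∀ p : X × ℝ, η p.1 ≤ 3/4 → B p = f (Zm (1/2) p.1) := by
    intro p h
    by_cases h' : 3/4 ≤ η p.1
    · rw [hBpos p h']
      have h5 : p.2 * (4 * η p.1 - 3) = 0 := by
        have : η p.1 = 3/4 := le_antisymm h h'
        rw [this]; ring
      rw [h5, projIcc_left]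
      exact K0 _
    · exact dif_neg h'
  have hBc : Continuous B := by
    refine glue _ B (f.continuous.comp ((continuous_Zm' (1/2)).comp continuous_fst)) ?_ hBsmall
    rw [continuousOn_iff_continuous_domRestrict]
    have h6 : Continuous fun p : {p : X × ℝ | 3/4 ≤ η p.1} =>
        (K (projIcc 0 1 zero_le_one (p.1.2 * (4 * η p.1.1 - 3)),
          ⟨Zm (1/2) p.1.1, S_C1 p.2⟩) : X) := by
      apply continuous_subtype_val.comp
      apply K.continuous.comp
      apply Continuous.prodMk
      · apply continuous_projIcc.comp
        have := continuous_η
        fun_prop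
      · apply Continuous.subtype_mk
        exact (continuous_Zm' (1/2)).comp (continuous_fst.comp continuous_subtype_val)
    refine h6.congr ?_
    intro p
    exact (hBpos p.1 p.2).symm
  have hBC1 : ∀ z ∈ C1, ∀ t, B (z, t) ∈ Bd := by
    intro z hz t
    rw [hBpos (z, t) (by rw [(mem_C1 z).1 hz]; norm_num)]
    exact Subtype.coe_prop _
  have hBC2 : ∀ z ∈ C2, ∀ t, B (z, t) = f z := by
    intro z hz t
    rw [hBsmall (z, t) (by have := η_C2 hz; dsimp only; linarith)]
    dsimp only
    rw [Zm_C2 hz]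
  let fS : C(X, X) := ⟨fun z => f (Zm (1/2) z), f.continuous.comp (continuous_Zm' _)⟩
  let f1 : C(X, X) := ⟨fun z => B (z, 1), hBc.comp (f := fun z : X => (z, (1:ℝ))) (by fun_prop)⟩
  refine ⟨f1, bh_trans (step_A f fS hf fun z => rfl) ?_, ?_, b, hbC2, ?_⟩
  · apply bh_of fS f1 (fun z t => B (z, t)) hBc
    · intro z
      by_cases h : 3/4 ≤ η z
      · rw [hBpos (z, 0) h, zero_mul, projIcc_left]
        exact K0 _
      · exact dif_neg h
    · intro z; rfl
    · intro z hz t _ _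
      rcases hz with hz | hz
      · exact hBC1 z hz t
      · rw [hBC2 z hz t]; exact Or.inl (h21 hz)
  · intro z hz
    change B (z, 1) ∈ C1
    rw [hBC2 z hz]; exact h21 hz
  · intro z hz
    change B (z, 1) = b
    have h5 : η z = 1 := (mem_C1 z).1 hz
    rw [hBpos (z, 1) (by rw [h5]; norm_num)]
    have h6 : (1:ℝ) * (4 * η z - 3) = 1 := by rw [h5]; norm_num
    dsimp only
    rw [h6, projIcc_right]
    exact congrArg Subtype.val (K1 ⟨_, S_C1 (z := z) (by rw [h5]; norm_num)⟩)

/-- Collar coordinate. -/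
noncomputable def χ (z : X) : ℝ := min 1 (4 * (1 - η z))

lemma continuous_χ : Continuous χ := by
  have := continuous_η
  unfold χ; fun_prop

lemma χ_small {z : X} (h : η z ≤ 3/4) : χ z = 1 := min_eq_left (by linarith)
lemma χ_large {z : X} (h : 3/4 ≤ η z) : χ z = 4 * (1 - η z) := min_eq_right (by linarith)

lemma step_C (f1 : C(X, X)) (h2 : ∀ z ∈ C2, f1 z ∈ C1) (b : X) (hbC : b ∈ C2)
    (hb : ∀ z ∈ C1, f1 z = b) :
    ∃ g : C(X, X), BoundaryHomotopic f1 g ∧ ∃ x₀ : X, {x : X | g x = x} = {x₀} := by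
  obtain ⟨H, hH, H0, H1, HC2, HC1⟩ := central f1 f1.continuous h2 b hb
  have hf1 : BoundaryPreserving f1 := by
    rintro z (hz | hz)
    · rw [hb z hz]; exact Or.inr hbC
    · exact Or.inl (h2 z hz)
  have hχ := continuous_χ
  have hηc := continuous_η
  have hZ := continuous_Zm
  let fS : C(X, X) := ⟨fun z => f1 (Zm (1/2) z), f1.continuous.comp (continuous_Zm' _)⟩
  have hSc := continuous_Zm' (1/2)
  have hGc : Continuous fun p : X × ℝ => H (Zm (1/2) p.1) (p.2 * min 1 (2 * χ p.1)) :=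
    hH.comp (f := fun p : X × ℝ => (Zm (1/2) p.1, p.2 * min 1 (2 * χ p.1))) (by fun_prop)
  let g0 : C(X, X) := ⟨fun z => H (Zm (1/2) z) (1 * min 1 (2 * χ z)),
    hGc.comp (f := fun z : X => (z, (1:ℝ))) (by fun_prop)⟩
  have hC : BoundaryHomotopic fS g0 := by
    apply bh_of fS g0 (fun z t => H (Zm (1/2) z) (t * min 1 (2 * χ z))) hGc
    · intro z; rw [zero_mul, H0]; rfl
    · intro z; rfl
    · intro z hz t t0 t1
      rcases hz with hz | hz
      · have h5 := (mem_C1 z).1 hz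
        rw [χ_large (by rw [h5]; norm_num), h5]
        norm_num
        rw [H0, hb _ (by have := Zm_C1 (t := 1/2) (by norm_num) hz; norm_num at this; exact this)]
        exact Or.inr hbC
      · rw [Zm_C2 hz]; exact Or.inl (HC2 _ z hz)
  -- the collar path
  let c0 : X := Q 2 1
  have hc0 : c0 ∈ C1 := Q_C1 le_rfl (by norm_num)
  let α : ℝ → X := fun s => H c0 s
  have hα : Continuous α := hH.comp (f := fun s : ℝ => (c0, s)) (by fun_prop)
  have hα0 : α 0 = b := by change H c0 0 = b; rw [H0, hb _ hc0]
  have hq : α 1 ∈ C1 := H1 c0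
  have hηq : η (α 1) = 1 := (mem_C1 _).1 hq
  have g0_large : ∀ z, 3/4 ≤ η z → g0 z = α (min 1 (2 * χ z)) := by
    intro z hz
    change H (Zm (1/2) z) (1 * min 1 (2 * χ z)) = H c0 _
    rw [one_mul]
    exact HC1 _ _ (S_C1 hz) _ hc0
  have g0_small : ∀ z, η z ≤ 3/4 → g0 z ∈ C1 := by
    intro z hz
    change H (Zm (1/2) z) (1 * min 1 (2 * χ z)) ∈ C1
    rw [χ_small hz]; norm_num
    exact H1 _
  let A : ℝ × ℝ → X := fun p => if p.1 ≤ 1/2 then Zm (-p.2 / 3) (α (2 * p.1)) else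
    Zm (-(p.2 * (2 - 2 * p.1)) / 3) (α 1)
  have hA1 : ∀ τ t, τ ≤ 1/2 → A (τ, t) = Zm (-t / 3) (α (2 * τ)) := fun τ t h => if_pos h
  have hA2 : ∀ τ t, 1/2 < τ → A (τ, t) = Zm (-(t * (2 - 2 * τ)) / 3) (α 1) :=
    fun τ t h => if_neg (not_le.2 h)
  have hAc : Continuous A := by
    apply Continuous.if_le
    · exact continuous_Zm.comp (f := fun p : ℝ × ℝ => (-p.2 / 3, α (2 * p.1))) (by fun_prop)
    · exact continuous_Zm.comp (f := fun p : ℝ × ℝ => (-(p.2 * (2 - 2 * p.1)) / 3, α 1))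
        (by fun_prop)
    · fun_prop
    · fun_prop
    · intro p hp
      rw [hp]; norm_num
  let E : X × ℝ → X := fun p => if η p.1 ≤ 3/4 then g0 p.1 else A (χ p.1, p.2)
  have hE1 : ∀ z t, η z ≤ 3/4 → E (z, t) = g0 z := fun z t h => if_pos h
  have hE2 : ∀ z t, 3/4 < η z → E (z, t) = A (χ z, t) := fun z t h => if_neg (not_le.2 h)
  have hEc : Continuous E := by
    apply Continuous.if_le
    · fun_prop
    · exact hAc.comp (f := fun p : X × ℝ => (χ p.1, p.2)) (by fun_prop)
    · fun_prop
    · fun_prop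
    · intro p hp
      rw [g0_large _ hp.ge, χ_small hp.le, hA2 _ _ (by norm_num)]
      norm_num [Zm_zero]
  let g : C(X, X) := ⟨fun z => E (z, 1), hEc.comp (f := fun z : X => (z, (1:ℝ))) (by fun_prop)⟩
  have hDh : BoundaryHomotopic g0 g := by
    apply bh_of g0 g (fun z t => E (z, t)) hEc
    · intro z
      rcases le_or_gt (η z) (3/4) with h | h
      · exact hE1 z 0 h
      · rw [hE2 z 0 h, g0_large z h.le]
        rcases le_or_gt (χ z) (1/2) with h' | h'
        · rw [hA1 _ _ h', min_eq_right (by linarith)]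
          norm_num [Zm_zero]
        · rw [hA2 _ _ h', min_eq_left (by linarith)]
          norm_num [Zm_zero]
    · intro z; rfl
    · intro z hz t t0 t1
      rcases hz with hz | hz
      · have h5 := (mem_C1 z).1 hz
        have h6 : χ z = 0 := by rw [χ_large (by rw [h5]; norm_num), h5]; norm_num
        rw [hE2 z t (by rw [h5]; norm_num), h6, hA1 _ _ (by norm_num), mul_zero, hα0, Zm_C2 hbC]
        exact Or.inr hbC
      · have h5 := η_C2 hz
        rw [hE1 z t (by linarith)]
        exact Or.inl (g0_small z (by linarith))
  refine ⟨g, bh_trans (step_A f1 fS hf1 fun z => rfl) (bh_trans hC hDh), Zm (-(2/9)) (α 1), ?_⟩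
  have hηR : ∀ t, 0 ≤ t → t ≤ 1 → η (Zm (-t / 3) (α 1)) = 1 - t / 4 := by
    intro t t0 t1
    rw [η_Zm (by rw [hηq]; norm_num), hηq, max_eq_left (by linarith), min_eq_right (by linarith)]
    ring
  ext z
  rw [mem_singleton_iff]
  change E (z, 1) = z ↔ _
  constructor
  · intro hz
    rcases le_or_gt (η z) (3/4) with h | h
    · exfalso
      rw [hE1 z 1 h] at hz
      have := (mem_C1 _).1 (g0_small z h)
      rw [hz] at this
      linarith
    · rw [hE2 z 1 h] at hz
      have hχz := χ_large h.le
      have hle := η_le_one z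
      rcases le_or_gt (χ z) (1/2) with h' | h'
      · exfalso
        rw [hA1 _ _ h'] at hz
        rw [← hz] at h
        set w := α (2 * χ z) with hw
        rcases le_total (η w) (1/4) with h7 | h7
        · rw [Zm_small h7] at h; linarith
        · rw [η_Zm h7, max_eq_left (by norm_num)] at h
          have := lt_of_lt_of_le h (min_le_right _ _)
          have := η_le_one w
          linarith
      · rw [hA2 _ _ h'] at hz
        have h8 := hηR (1 * (2 - 2 * χ z)) (by linarith) (by linarith)
        rw [hz] at h8
        have h9 : χ z = 2/3 := by linarith
        rw [← hz, h9]; norm_num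
  · rintro rfl
    have h5 := hηR (2/3) (by norm_num) (by norm_num)
    rw [show (-(2/3) / 3 : ℝ) = -(2/9) by norm_num] at h5
    have h6 : χ (Zm (-(2/9)) (α 1)) = 2/3 := by
      rw [χ_large (by rw [h5]; norm_num), h5]; norm_num
    rw [hE2 _ _ (by rw [h5]; norm_num), h6, hA2 _ _ (by norm_num)]
    norm_num

/-- A boundary semi-essential map of the punctured Möbius band interchanging the
boundary circles, with `f|C₂ : C₂ → C₁` essential and `f|C₁` inessential, is
boundary-homotopic to a map with exactly one fixed point. -/
theorem stmt_13 (f : C(X, X)) (hf : BoundaryPreserving f)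
    (h21 : MapsTo f C2 C1) (h12 : MapsTo f C1 C2)
    (he2 : Essential (restrictMap f h21))
    (h1 : Inessential (restrictMap f (h12.mono_right Set.subset_union_right : MapsTo f C1 Bd))) :
    ∃ g : C(X, X), BoundaryHomotopic f g ∧ ∃ x₀ : X, {x : X | g x = x} = {x₀} := by
  obtain ⟨f1, hf1, h2, b, hbC, hb⟩ := step_B f hf h21 h12 _ h1
  obtain ⟨g, hg, hx⟩ := step_C f1 h2 b hbC hb
  exact ⟨g, bh_trans hf1 hg, hx⟩

end PMB
end
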